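/- arXiv:2006.11420 — 9 statements merged into one kernel-verified Lean document; each statement's English description precedes it below -/
import Mathlib

section
/- Let f, g : ℝ → ℝ be nonconstant real polynomial functions, let φ : ℝ → ℝ be a bi-Lipschitz homeomorphism, and let c > 0 be a constant such that g ∘ φ = c·f. Then (i) deg f = deg g, and (ii) there exists a nonzero real number l such that φ(t)/t → l both as t → +∞ and as t → −∞ (in particular the two one-sided limits at infinity exist, are finite, nonzero, and equal). -/
open Filter Topology

open Asymptotics Bornology in
theorem aux_stmt (p q : Polynomial ℝ) (hp : 1 ≤ p.natDegree) (hq : 1 ≤ q.natDegree)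
    (φ : ℝ → ℝ) (hφbij : Function.Bijective φ)
    (hφlip : ∃ K : NNReal, LipschitzWith K φ)
    (hφinv : ∃ K : NNReal, LipschitzWith K (Function.invFun φ))
    (c : ℝ) (hc : 0 < c)
    (heq : ∀ t : ℝ, q.eval (φ t) = c * p.eval t) :
    p.natDegree = q.natDegree ∧
      ∃ l : ℝ, l ≠ 0 ∧ Tendsto (fun t => φ t / t) (cobounded ℝ) (𝓝 l) := by
  obtain ⟨K, hK⟩ := hφlip
  obtain ⟨K', hK'⟩ := hφinv
  have hanti : AntilipschitzWith K' φ :=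
    hK'.to_rightInverse (Function.leftInverse_invFun hφbij.injective)
  have hcob := hanti.tendsto_cobounded
  have hp0 : p ≠ 0 := by rintro rfl; simp at hp
  have hq0 : q ≠ 0 := by rintro rfl; simp at hq
  have ha : p.leadingCoeff ≠ 0 := Polynomial.leadingCoeff_ne_zero.mpr hp0
  have hb : q.leadingCoeff ≠ 0 := Polynomial.leadingCoeff_ne_zero.mpr hq0
  set a := p.leadingCoeff with ha_def
  set b := q.leadingCoeff with hb_def
  have e1 : (fun t => q.eval (φ t)) ~[cobounded ℝ] (fun t => b * φ t ^ q.natDegree) :=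
    (Polynomial.isEquivalent_cobounded_leading_monomial (P := q)).comp_tendsto hcob
  have e2 : (fun t => c * p.eval t) ~[cobounded ℝ] (fun t => c * (a * t ^ p.natDegree)) :=
    (IsEquivalent.refl (u := fun _ : ℝ => c)).mul
      (Polynomial.isEquivalent_cobounded_leading_monomial (P := p))
  have e3 : (fun t => b * φ t ^ q.natDegree) ~[cobounded ℝ]
      (fun t => c * (a * t ^ p.natDegree)) := by
    refine e1.symm.trans ?_
    simpa only [heq] using e2
  have hO0 : ∀ d : ℝ, (fun _ : ℝ => d) =O[cobounded ℝ] (fun t : ℝ => t) := fun d =>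
    (isLittleO_const_id_cobounded (E'' := ℝ) d).isBigO
  have t1 : φ =O[cobounded ℝ] (fun t : ℝ => t) := by
    have h1 : (fun t => φ t - φ 0) =O[cobounded ℝ] (fun t : ℝ => t) := by
      refine IsBigO.of_bound K (Eventually.of_forall fun t => ?_)
      have := hK.dist_le_mul t 0
      simpa [Real.dist_eq] using this
    simpa using h1.add (hO0 (φ 0))
  have t2 : (fun t : ℝ => t) =O[cobounded ℝ] φ := by
    have h1 : (fun t : ℝ => t) =O[cobounded ℝ] (fun t => φ t - φ 0) := by
      refine IsBigO.of_bound K' (Eventually.of_forall fun t => ?_)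
      have := hanti.le_mul_dist t 0
      simpa [Real.dist_eq] using this
    refine h1.trans ((isBigO_refl _ _).sub ?_)
    exact ((isLittleO_const_id_cobounded (E'' := ℝ) (φ 0)).comp_tendsto hcob).isBigO
  have t3 : (fun t : ℝ => t ^ q.natDegree) =Θ[cobounded ℝ] (fun t : ℝ => t ^ p.natDegree) := by
    have h1 : (fun t : ℝ => φ t ^ q.natDegree) =Θ[cobounded ℝ] (fun t : ℝ => t ^ p.natDegree) := by
      have := e3.isTheta
      rwa [isTheta_const_mul_left hb, isTheta_const_mul_right hc.ne',
        isTheta_const_mul_right ha] at this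
    exact (IsTheta.pow ⟨t2, t1⟩ _).trans h1
  have hne0 : ∀ᶠ t : ℝ in cobounded ℝ, t ≠ 0 := eventually_ne_cobounded 0
  have key : ∀ m n : ℕ, m < n → ¬ ((fun t : ℝ => t ^ n) =O[cobounded ℝ] (fun t : ℝ => t ^ m)) := by
    intro m n hmn h
    have h2 := (isLittleO_pow_pow_cobounded_of_lt (R := ℝ) hmn).trans_isBigO h
    have h3 := isLittleO_irrefl' (f' := fun t : ℝ => t ^ m) (l := cobounded ℝ)
      (hne0.mono (fun t ht => by simpa using fun h => absurd h ht)).frequently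
    exact h3 h2
  have hdeg : p.natDegree = q.natDegree := by
    rcases lt_trichotomy p.natDegree q.natDegree with h | h | h
    · exact absurd t3.1 (key _ _ h)
    · exact h
    · exact absurd t3.2 (key _ _ h)
  refine ⟨hdeg, ?_⟩
  set n := q.natDegree with hn
  have hn0 : (n : ℝ) ≠ 0 := by
    have : n ≠ 0 := by omega
    exact_mod_cast this
  have lim : Tendsto (fun t => (φ t / t) ^ n) (cobounded ℝ) (𝓝 (c * a / b)) := by
    rw [hdeg] at e3
    have h1 := (isEquivalent_iff_tendsto_one
      (hne0.mono fun t ht => by positivity)).1 e3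
    have h2 := h1.mul_const (c * a / b)
    rw [one_mul] at h2
    refine h2.congr' (hne0.mono fun t ht => ?_)
    simp only [Pi.div_apply, div_pow]
    field_simp
  have lim2 : Tendsto (fun t => |φ t / t|) (cobounded ℝ) (𝓝 (|c * a / b| ^ (1 / (n : ℝ)))) := by
    have h1 := (lim.abs).rpow_const (p := 1 / (n : ℝ)) (Or.inr (by positivity))
    refine h1.congr fun t => ?_
    rw [abs_pow, ← Real.rpow_natCast, ← Real.rpow_mul (abs_nonneg _), mul_one_div_cancel hn0,
      Real.rpow_one]
  have hl : |c * a / b| ^ (1 / (n : ℝ)) ≠ 0 := by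
    have : 0 < |c * a / b| := by positivity
    positivity
  have hbig : ∀ᶠ t in cobounded ℝ, |φ 0| < |φ t| :=
    (tendsto_norm_cobounded_atTop.comp hcob).eventually_gt_atTop |φ 0|
  rcases hK.continuous.strictMono_of_inj hφbij.injective with hm | hm
  · refine ⟨_, hl, lim2.congr' ?_⟩
    filter_upwards [hbig, hne0] with t ht h0
    apply abs_of_nonneg
    rcases lt_or_gt_of_ne h0 with h | h
    · have := hm h
      exact div_nonneg_of_nonpos (by grind) h.le
    · have := hm h
      exact div_nonneg (by grind) h.le
  · refine ⟨_, neg_ne_zero.2 hl, lim2.neg.congr' ?_⟩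
    filter_upwards [hbig, hne0] with t ht h0
    rw [neg_eq_iff_eq_neg]
    apply abs_of_nonpos
    rcases lt_or_gt_of_ne h0 with h | h
    · have := hm h
      exact div_nonpos_of_nonneg_of_nonpos (by grind) h.le
    · have := hm h
      exact div_nonpos_of_nonpos_of_nonneg (by grind) h.le

/-- If `f, g` are nonconstant real polynomial functions, `φ` is a bi-Lipschitz
homeomorphism of `ℝ` and `g ∘ φ = c·f` with `c > 0`, then `f` and `g` have the same
degree, and `φ(t)/t` tends to a common finite nonzero limit as `t → +∞` and `t → −∞`. -/
theorem stmt_0 (p q : Polynomial ℝ) (hp : 1 ≤ p.natDegree) (hq : 1 ≤ q.natDegree)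
    (φ : ℝ → ℝ) (hφbij : Function.Bijective φ)
    (hφlip : ∃ K : NNReal, LipschitzWith K φ)
    (hφinv : ∃ K : NNReal, LipschitzWith K (Function.invFun φ))
    (c : ℝ) (hc : 0 < c)
    (heq : ∀ t : ℝ, q.eval (φ t) = c * p.eval t) :
    p.natDegree = q.natDegree ∧
      ∃ l : ℝ, l ≠ 0 ∧
        Tendsto (fun t => φ t / t) atTop (𝓝 l) ∧
        Tendsto (fun t => φ t / t) atBot (𝓝 l) := by
  obtain ⟨h, l, hl, ht⟩ := aux_stmt p q hp hq φ hφbij hφlip hφinv c hc heq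
  rw [IsOrderBornology.cobounded_eq] at ht
  exact ⟨h, l, hl, ht.mono_left le_sup_right, ht.mono_left le_sup_left⟩
end

section
/- Let f, g : ℝ → ℝ be real polynomial functions of the same degree d ≥ 1. If neither f nor g has a critical point (i.e., f′(t) ≠ 0 and g′(t) ≠ 0 for all t ∈ ℝ), then f and g are Lipschitz equivalent. -/
open Filter Topology

/-- Two functions `f, g : ℝ → ℝ` are Lipschitz equivalent if there is a bi-Lipschitz
homeomorphism `φ` of `ℝ` and a constant `c > 0` with `g ∘ φ = c·f`. -/
def LipschitzEquivFun (f g : ℝ → ℝ) : Prop :=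
  ∃ φ : ℝ → ℝ, Function.Bijective φ ∧ (∃ K : NNReal, LipschitzWith K φ) ∧
    (∃ K : NNReal, LipschitzWith K (Function.invFun φ)) ∧
    ∃ c : ℝ, 0 < c ∧ ∀ t : ℝ, g (φ t) = c * f t

open Polynomial in
lemma aux_bigO (a b : ℝ[X]) (hdeg : a.natDegree ≤ b.natDegree) (hb : ∀ t : ℝ, b.eval t ≠ 0) :
    ∃ C : ℝ, 1 ≤ C ∧ ∀ t : ℝ, |a.eval t| ≤ C * |b.eval t| := by
  have hb0 : b ≠ 0 := by
    rintro rfl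
    exact hb 0 (by simp)
  have key : ∀ a b : ℝ[X], a.natDegree ≤ b.natDegree → b ≠ 0 →
      (fun t => a.eval t) =O[atTop] (fun t => b.eval t) := by
    intro a b h hb
    apply Polynomial.isBigO_atTop_of_degree_le
    exact (Polynomial.degree_le_natDegree).trans
      (by rw [Polynomial.degree_eq_natDegree hb]; exact_mod_cast h)
  have h1 := key a b hdeg hb0
  have h2 := key (a.comp (-X)) (b.comp (-X)) (by simpa [Polynomial.natDegree_comp] using hdeg)
    (by
      intro h
      have := congrArg (Polynomial.eval 0) h
      simp at this
      exact hb 0 (by simpa using this))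
  obtain ⟨c1, hc1⟩ := h1.bound
  obtain ⟨c2, hc2⟩ := h2.bound
  obtain ⟨N1, hN1⟩ := eventually_atTop.1 hc1
  obtain ⟨N2, hN2⟩ := eventually_atTop.1 hc2
  have hcont : ContinuousOn (fun t => a.eval t / b.eval t) (Set.Icc (-N2) N1) :=
    (a.continuous.div b.continuous hb).continuousOn
  obtain ⟨c3, hc3⟩ := isCompact_Icc.exists_bound_of_continuousOn hcont
  refine ⟨max 1 (max c1 (max c2 c3)), le_max_left _ _, fun t => ?_⟩
  have hpos := abs_nonneg (b.eval t)
  rcases le_total N1 t with h | h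
  · refine (hN1 t h).trans (mul_le_mul_of_nonneg_right ?_ hpos)
    simp
  rcases le_total t (-N2) with h' | h'
  · have := hN2 (-t) (by linarith)
    simp only [Polynomial.eval_comp, Polynomial.eval_neg, Polynomial.eval_X, neg_neg] at this
    refine this.trans (mul_le_mul_of_nonneg_right ?_ hpos)
    simp
  · have := hc3 t ⟨h', h⟩
    rw [Real.norm_eq_abs, abs_div, div_le_iff₀ (abs_pos.2 (hb t))] at this
    refine this.trans (mul_le_mul_of_nonneg_right ?_ hpos)
    simp

lemma aux_homeo (q : Polynomial ℝ) (hd : 1 ≤ q.natDegree)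
    (hq' : ∀ t : ℝ, q.derivative.eval t ≠ 0) : IsHomeomorph (fun t => q.eval t) := by
  have hproper : IsProperMap (fun t : ℝ => q.eval t) := by
    rw [isProperMap_iff_tendsto_cocompact]
    refine ⟨q.continuous, ?_⟩
    conv => arg 3; rw [← Metric.cobounded_eq_cocompact, ← comap_norm_atTop]
    rw [tendsto_comap_iff]
    exact q.tendsto_norm_atTop (Polynomial.natDegree_pos_iff_degree_pos.1 hd)
      (tendsto_norm_cocompact_atTop)
  have hopen : IsOpenMap (fun t : ℝ => q.eval t) :=
    isOpenMap_of_hasStrictDerivAt (fun t => q.hasStrictDerivAt t) hq'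
  refine ⟨q.continuous, hopen, ?_, ?_⟩
  · have : ∀ x y : ℝ, x < y → q.eval x ≠ q.eval y := by
      intro x y hxy h
      obtain ⟨c, _, hc⟩ := exists_hasDerivAt_eq_zero hxy q.continuous.continuousOn h
        (fun t _ => q.hasDerivAt t)
      exact hq' c hc
    intro x y h
    rcases lt_trichotomy x y with h1 | h1 | h1
    · exact absurd h (this _ _ h1)
    · exact h1
    · exact absurd h.symm (this _ _ h1)
  · have hcl : IsClopen (Set.range (fun t : ℝ => q.eval t)) :=
      ⟨hproper.isClosedMap.isClosed_range, hopen.isOpen_range⟩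
    exact Set.range_eq_univ.1 (hcl.eq_univ (Set.range_nonempty _))

open Polynomial in
lemma aux_bound (p q : ℝ[X]) (n : ℕ)
    (hp : p.natDegree = n + 1) (hq : q.natDegree = n + 1)
    (hq' : ∀ t : ℝ, q.derivative.eval t ≠ 0) :
    ∃ K : ℝ, 0 ≤ K ∧ ∀ t u : ℝ, q.eval u = p.eval t →
      (p.derivative.eval t) ^ 2 ≤ K * (q.derivative.eval u) ^ 2 := by
  have hX : (1 + X ^ 2 : ℝ[X]).natDegree = 2 := by compute_degree!
  have hXn : ∀ m, ((1 + X ^ 2 : ℝ[X]) ^ m).natDegree = 2 * m := by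
    intro m; rw [natDegree_pow, hX, mul_comm]
  have hXne : ∀ m, ∀ t : ℝ, ((1 + X ^ 2 : ℝ[X]) ^ m).eval t ≠ 0 := by
    intro m t
    simp only [eval_pow, eval_add, eval_one, eval_X]
    positivity
  have hder : ∀ r : ℝ[X], r.natDegree = n + 1 → (r.derivative ^ 2).natDegree = 2 * n := by
    intro r hr
    rw [natDegree_pow, natDegree_derivative, hr]; rfl
  have hsq : ∀ r : ℝ[X], r.natDegree = n + 1 → (1 + r ^ 2).natDegree = 2 * (n + 1) := by
    intro r hr
    have : (r ^ 2).natDegree = 2 * (n + 1) := by rw [natDegree_pow, hr]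
    rw [natDegree_add_eq_right_of_natDegree_lt, this]
    rw [this]; simp
  obtain ⟨C1, h1, H1⟩ := aux_bigO (p.derivative ^ 2) ((1 + X ^ 2) ^ n)
    (by rw [hder p hp, hXn]) (hXne n)
  obtain ⟨C2, h2, H2⟩ := aux_bigO ((1 + X ^ 2) ^ n) (q.derivative ^ 2)
    (by rw [hder q hq, hXn]) (fun t => by simpa using hq' t)
  obtain ⟨C3, h3, H3⟩ := aux_bigO ((1 + X ^ 2) ^ (n + 1)) (1 + p ^ 2)
    (by rw [hsq p hp, hXn]) (fun t => by
      simp only [eval_pow, eval_add, eval_one]; positivity)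
  obtain ⟨C4, h4, H4⟩ := aux_bigO (1 + q ^ 2) ((1 + X ^ 2) ^ (n + 1))
    (by rw [hsq q hq, hXn]) (hXne (n + 1))
  refine ⟨C1 * ((C3 * C4) ^ n * C2), by positivity, fun t u htu => ?_⟩
  have H1 := H1 t
  have H2 := H2 u
  have H3 := H3 t
  have H4 := H4 u
  simp only [eval_pow, eval_add, eval_one, eval_X] at H1 H2 H3 H4
  have e : ∀ x : ℝ, |1 + x ^ 2| = 1 + x ^ 2 := fun x => abs_of_pos (by positivity)
  simp only [abs_pow, sq_abs, e] at H1 H2 H3 H4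
  have hC : 1 ≤ C3 * C4 := one_le_mul_of_one_le_of_one_le h3 h4
  have H5 : (1 + t ^ 2) ^ (n + 1) ≤ (C3 * C4 * (1 + u ^ 2)) ^ (n + 1) := by
    calc (1 + t ^ 2) ^ (n + 1) ≤ C3 * (1 + p.eval t ^ 2) := H3
      _ = C3 * (1 + q.eval u ^ 2) := by rw [htu]
      _ ≤ C3 * (C4 * (1 + u ^ 2) ^ (n + 1)) := by gcongr
      _ = (C3 * C4) * (1 + u ^ 2) ^ (n + 1) := by ring
      _ ≤ (C3 * C4) ^ (n + 1) * (1 + u ^ 2) ^ (n + 1) := by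
        gcongr
        exact le_self_pow₀ hC (by simp)
      _ = _ := by simp only [mul_pow]
  have H6 : 1 + t ^ 2 ≤ C3 * C4 * (1 + u ^ 2) :=
    le_of_pow_le_pow_left₀ (by simp) (by positivity) H5
  calc _ ≤ C1 * (1 + t ^ 2) ^ n := H1
    _ ≤ C1 * (C3 * C4 * (1 + u ^ 2)) ^ n := by gcongr
    _ = C1 * ((C3 * C4) ^ n * (1 + u ^ 2) ^ n) := by rw [mul_pow]
    _ ≤ C1 * ((C3 * C4) ^ n * (C2 * (q.derivative.eval u) ^ 2)) := by gcongr
    _ = _ := by ring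

lemma aux_lip (p q : Polynomial ℝ) (n : ℕ)
    (hp : p.natDegree = n + 1) (hq : q.natDegree = n + 1)
    (hq' : ∀ t : ℝ, q.derivative.eval t ≠ 0) (φ : ℝ → ℝ)
    (hφ : ∀ t, q.eval (φ t) = p.eval t) : ∃ K : NNReal, LipschitzWith K φ := by
  obtain ⟨K, hK0, hK⟩ := aux_bound p q n hp hq hq'
  have hh := aux_homeo q (by omega) hq'
  let e := hh.homeomorph
  have he : ∀ x, e x = q.eval x := fun x => rfl
  have hφe : φ = fun t => e.symm (p.eval t) := by
    funext t
    rw [e.eq_symm_apply, he, hφ]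
  have hd : ∀ t, HasDerivAt φ ((q.derivative.eval (φ t))⁻¹ * p.derivative.eval t) t := by
    intro t
    have h1 : HasDerivAt e.symm ((q.derivative.eval (e.symm (p.eval t)))⁻¹) (p.eval t) :=
      HasDerivAt.of_local_left_inverse e.symm.continuous.continuousAt
        (q.hasDerivAt _) (hq' _) (Eventually.of_forall fun y => e.apply_symm_apply y)
    have h2 := h1.comp t (p.hasDerivAt t)
    rw [hφe]
    exact h2
  refine ⟨Real.toNNReal √K, lipschitzWith_of_nnnorm_deriv_le
    (fun t => (hd t).differentiableAt) fun t => ?_⟩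
  rw [← NNReal.coe_le_coe, (hd t).deriv, coe_nnnorm, Real.coe_toNNReal _ (Real.sqrt_nonneg _), Real.norm_eq_abs]
  apply Real.abs_le_sqrt
  rw [mul_pow, inv_pow, inv_mul_le_iff₀ (by have := hq' (φ t); positivity), mul_comm]
  exact hK _ _ (hφ t)

theorem stmt_2 (p q : Polynomial ℝ) (d : ℕ) (hd : 1 ≤ d)
    (hp : p.natDegree = d) (hq : q.natDegree = d)
    (hp' : ∀ t : ℝ, p.derivative.eval t ≠ 0)
    (hq' : ∀ t : ℝ, q.derivative.eval t ≠ 0) :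
    LipschitzEquivFun (fun t => p.eval t) (fun t => q.eval t) := by
  obtain ⟨n, rfl⟩ : ∃ n, d = n + 1 := ⟨d - 1, by omega⟩
  have hhp := aux_homeo p (by omega) hp'
  have hhq := aux_homeo q (by omega) hq'
  let ep := hhp.homeomorph
  let eq := hhq.homeomorph
  let φ : ℝ → ℝ := fun t => eq.symm (ep t)
  have hφ : ∀ t, q.eval (φ t) = p.eval t := fun t => eq.apply_symm_apply (ep t)
  have hbij : Function.Bijective φ := eq.symm.bijective.comp ep.bijective
  refine ⟨φ, hbij, aux_lip p q n hp hq hq' φ hφ, aux_lip q p n hq hp hp' _ ?_, 1, one_pos, ?_⟩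
  · intro s
    rw [← hφ, Function.rightInverse_invFun hbij.2 s]
  · intro t
    simpa using hφ t
end

section
/- Let f, g : ℝ → ℝ be real polynomial functions of the same odd degree d ≥ 1. Suppose f has exactly one critical point t₀, with multiplicity k, and g has exactly one critical point s₀, with the same multiplicity k. Suppose further that f(t₀) and g(s₀) have the same sign (both positive, both negative, or both zero). Then f and g are Lipschitz equivalent. -/
open Filter Topology

/-- The multiplicity of a function `f` at `t₀`: the least `k ≥ 1` such that the `k`-th
derivative of `f` at `t₀` is nonzero. -/
noncomputable def multAt (f : ℝ → ℝ) (t₀ : ℝ) : ℕ :=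
  sInf {k : ℕ | 1 ≤ k ∧ iteratedDeriv k f t₀ ≠ 0}

section Helpers
open Polynomial

def PolyGood (p : Polynomial ℝ) (t₀ : ℝ) (j m : ℕ) : Prop :=
  ∃ M : ℝ, 0 < M ∧ ∀ t : ℝ,
    (p.eval t - p.eval t₀)^2 ≤ M * ((t - t₀)^(2*(j+1)) * (1 + (t-t₀)^2)^m) ∧
    (t - t₀)^(2*(j+1)) * (1 + (t-t₀)^2)^m ≤ M * (p.eval t - p.eval t₀)^2 ∧
    (p.derivative.eval t)^2 ≤ M * ((t - t₀)^(2*j) * (1 + (t-t₀)^2)^m) ∧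
    (t - t₀)^(2*j) * (1 + (t-t₀)^2)^m ≤ M * (p.derivative.eval t)^2

lemma aux_le (x y N : ℝ) (j m : ℕ) (hN : 1 ≤ N)
    (h : x^(2*(j+1)) * (1 + x^2)^m ≤ N * (y^(2*(j+1)) * (1 + y^2)^m)) : x^2 ≤ N * y^2 := by
  by_contra hc
  push Not at hc
  rw [pow_mul, pow_mul] at h
  have hy : 0 ≤ y^2 := sq_nonneg y
  generalize x^2 = X at *
  generalize y^2 = Y at *
  have h1 : Y ≤ N * Y := by nlinarith
  have h2 : (1+Y)^m ≤ (1+X)^m := by gcongr; linarith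
  have h3 : (N*Y)^(j+1) < X^(j+1) := by gcongr
  have h4 : N * Y^(j+1) ≤ (N*Y)^(j+1) := by
    rw [mul_pow]; gcongr; exact le_self_pow₀ hN (by omega)
  have h5 : 0 < (1+Y)^m := by positivity
  have h6 : 0 ≤ Y^(j+1) := by positivity
  have : N * (Y^(j+1) * (1+Y)^m) < X^(j+1) * (1+X)^m := by
    calc N * (Y^(j+1) * (1+Y)^m) = (N * Y^(j+1)) * (1+Y)^m := by ring
      _ < X^(j+1) * (1+Y)^m := by gcongr; linarith
      _ ≤ _ := by gcongr; exact le_trans (by positivity) (h4.trans h3.le)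
  linarith

lemma lip_aux (p q : Polynomial ℝ) (t₀ s₀ c : ℝ) (hc : 0 < c) (j m : ℕ)
    (hp : PolyGood p t₀ j m) (hq : PolyGood q s₀ j m)
    (hs₀ : ∀ t : ℝ, q.derivative.eval t = 0 ↔ t = s₀)
    (hcs : c * p.eval t₀ = q.eval s₀)
    (hpi : Function.Injective (fun t => p.eval t))
    (e : ℝ ≃ₜ ℝ) (he : ∀ t, e t = q.eval t) :
    ∃ K : NNReal, LipschitzWith K (fun t => e.symm (c * p.eval t)) := by
  obtain ⟨M, hM, hp⟩ := hp
  obtain ⟨M', hM', hq⟩ := hq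
  set φ : ℝ → ℝ := fun t => e.symm (c * p.eval t) with hφ
  have hqφ : ∀ t, q.eval (φ t) = c * p.eval t := by
    intro t; rw [← he]; simp [hφ]
  have hcont : Continuous φ := e.symm.continuous.comp (by fun_prop)
  set N : ℝ := max 1 (M * (c^2)⁻¹ * M') with hN
  have hN1 : 1 ≤ N := le_max_left _ _
  have hN0 : 0 < N := by linarith
  have hxy : ∀ t, (t - t₀)^2 ≤ N * (φ t - s₀)^2 := by
    intro t
    apply aux_le _ _ _ j m hN1
    have h1 := (hp t).2.1
    have h2 := (hq (φ t)).1
    have h3 : (p.eval t - p.eval t₀)^2 = (c^2)⁻¹ * (q.eval (φ t) - q.eval s₀)^2 := by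
      rw [hqφ, ← hcs]; field_simp
    rw [h3] at h1
    have hnn : 0 ≤ (φ t - s₀)^(2*(j+1)) * (1 + (φ t-s₀)^2)^m := by
      rw [pow_mul]; positivity
    calc _ ≤ _ := h1
      _ ≤ M * ((c^2)⁻¹ * (M' * ((φ t - s₀)^(2*(j+1)) * (1 + (φ t-s₀)^2)^m))) := by gcongr
      _ = (M * (c^2)⁻¹ * M') * ((φ t - s₀)^(2*(j+1)) * (1 + (φ t-s₀)^2)^m) := by ring
      _ ≤ _ := by gcongr; exact le_max_right _ _
  set A : ℝ := c^2 * (M * (N^j * N^m * M')) with hA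
  have hA0 : 0 ≤ A := by positivity
  have hder : ∀ t, (c * p.derivative.eval t)^2 ≤ A * (q.derivative.eval (φ t))^2 := by
    intro t
    have h1 := (hp t).2.2.1
    have h2 := (hq (φ t)).2.2.2
    have h3 := hxy t
    rw [pow_mul] at h1 h2
    have h4 : 1 + (t-t₀)^2 ≤ N * (1 + (φ t - s₀)^2) := by linarith
    calc (c * p.derivative.eval t)^2 = c^2 * (p.derivative.eval t)^2 := by ring
      _ ≤ c^2 * (M * (((t - t₀)^2)^j * (1 + (t-t₀)^2)^m)) := by gcongr
      _ ≤ c^2 * (M * ((N * (φ t - s₀)^2)^j * (N * (1 + (φ t-s₀)^2))^m)) := by gcongr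
      _ = c^2 * (M * (N^j * N^m * (((φ t - s₀)^2)^j * (1 + (φ t-s₀)^2)^m))) := by
          rw [mul_pow N, mul_pow N]; ring
      _ ≤ c^2 * (M * (N^j * N^m * (M' * (q.derivative.eval (φ t))^2))) := by gcongr
      _ = _ := by rw [hA]; ring
  have hne : ∀ t, t ≠ t₀ → q.derivative.eval (φ t) ≠ 0 := by
    intro t ht h
    rw [hs₀] at h
    have := hqφ t
    rw [h, ← hcs] at this
    exact ht (hpi (mul_left_cancel₀ hc.ne' this)).symm
  have hd : ∀ t, t ≠ t₀ → HasDerivAt φ ((q.derivative.eval (φ t))⁻¹ * (c * p.derivative.eval t)) t := by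
    intro t ht
    have h1 : HasDerivAt e.symm (q.derivative.eval (φ t))⁻¹ (c * p.eval t) := by
      refine HasDerivAt.of_local_left_inverse (f := fun x => q.eval x)
        e.symm.continuous.continuousAt (q.hasDerivAt _) (hne t ht) ?_
      filter_upwards with y
      rw [← he]; simp
    exact h1.comp t ((p.hasDerivAt t).const_mul c)
  have hbd : ∀ t, t ≠ t₀ → |(q.derivative.eval (φ t))⁻¹ * (c * p.derivative.eval t)| ≤ √A := by
    intro t ht
    apply Real.abs_le_sqrt
    have h1 := hder t
    have h2 : 0 < (q.derivative.eval (φ t))^2 := by have := hne t ht; positivity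
    rw [mul_pow, inv_pow, inv_mul_le_iff₀ h2]
    linarith
  have hstep : ∀ a b, a < b → t₀ ∉ Set.Ioo a b → |φ b - φ a| ≤ √A * (b - a) := by
    intro a b hab hn
    obtain ⟨x, hx, hx'⟩ := exists_hasDerivAt_eq_slope φ _ hab hcont.continuousOn
      (fun x hx => hd x (fun h => hn (h ▸ hx)))
    have := hbd x (fun h => hn (h ▸ hx))
    rw [hx', abs_div, abs_of_pos (sub_pos.2 hab), div_le_iff₀ (sub_pos.2 hab)] at this
    exact this
  have hall : ∀ a b, a < b → |φ b - φ a| ≤ √A * (b - a) := by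
    intro a b hab
    by_cases h : t₀ ∈ Set.Ioo a b
    · have h1 := hstep a t₀ h.1 (fun h => lt_irrefl _ h.2)
      have h2 := hstep t₀ b h.2 (fun h => lt_irrefl _ h.1)
      have h3 := abs_sub_le (φ b) (φ t₀) (φ a)
      linarith
    · exact hstep a b hab h
  refine ⟨⟨√A, Real.sqrt_nonneg _⟩, LipschitzWith.of_dist_le_mul fun x y => ?_⟩
  rw [Real.dist_eq, Real.dist_eq]
  show _ ≤ √A * _
  rcases lt_trichotomy x y with h | h | h
  · rw [abs_sub_comm, abs_sub_comm x y, abs_of_pos (sub_pos.2 h)]; exact hall x y h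
  · subst h; simp
  · rw [abs_of_pos (sub_pos.2 h)]; exact hall y x h

lemma poly_bound (P Q : Polynomial ℝ) (h : P.degree ≤ Q.degree) (hQ : ∀ t, Q.eval t ≠ 0) :
    ∃ C : ℝ, 0 < C ∧ ∀ t, |P.eval t| ≤ C * |Q.eval t| := by
  have h1 : (fun x => P.eval x) =O[cocompact ℝ] (fun x => Q.eval x) := by
    rw [cocompact_eq_atBot_atTop]
    exact (isBigO_atBot_of_degree_le P Q h).sup (isBigO_atTop_of_degree_le P Q h)
  obtain ⟨c, hc⟩ := h1.bound
  obtain ⟨s, hs, hs'⟩ := Filter.mem_cocompact.1 hc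
  obtain ⟨b, hb⟩ := hs.exists_bound_of_continuousOn (f := fun t => P.eval t / Q.eval t)
    (Continuous.continuousOn (by
      exact P.continuous.div Q.continuous hQ))
  refine ⟨max 1 (max b c), by positivity, fun t => ?_⟩
  have hq : 0 < |Q.eval t| := abs_pos.2 (hQ t)
  by_cases ht : t ∈ s
  · have := hb t ht
    rw [Real.norm_eq_abs, abs_div, div_le_iff₀ hq] at this
    refine this.trans ?_
    gcongr
    exact (le_max_left _ _).trans (le_max_right _ _)
  · have : |P.eval t| ≤ c * |Q.eval t| := hs' ht
    refine this.trans ?_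
    gcongr
    exact (le_max_right _ _).trans (le_max_right _ _)

lemma poly_two (r : Polynomial ℝ) (m : ℕ) (a : ℝ) (hr : ∀ t, r.eval t ≠ 0) (hm : r.natDegree = m) :
    ∃ C : ℝ, 0 < C ∧ ∀ t, (r.eval t)^2 ≤ C * (1 + (t-a)^2)^m ∧ (1 + (t-a)^2)^m ≤ C * (r.eval t)^2 := by
  have hr0 : r ≠ 0 := fun h => hr 0 (by simp [h])
  set w : Polynomial ℝ := (1 + (X - C a)^2)^m with hw
  have hwe : ∀ t, w.eval t = (1 + (t-a)^2)^m := by intro t; simp [hw]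
  have hw0 : ∀ t, 0 < w.eval t := by intro t; rw [hwe]; positivity
  have hdeg : (r^2).degree = w.degree := by
    have h1 : (1 + (X - C a)^2 : Polynomial ℝ).degree = 2 := by
      rw [degree_add_eq_right_of_degree_lt]
      · simp
      · simp
    rw [hw, degree_pow, degree_pow, h1, degree_eq_natDegree hr0, hm]
    simp [mul_comm]
  obtain ⟨C1, hC1, h1⟩ := poly_bound (r^2) w hdeg.le (fun t => (hw0 t).ne')
  obtain ⟨C2, hC2, h2⟩ := poly_bound w (r^2) hdeg.ge (fun t => by simpa using hr t)
  refine ⟨max C1 C2, by positivity, fun t => ⟨?_, ?_⟩⟩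
  · have := h1 t
    rw [abs_of_pos (hw0 t), hwe, eval_pow, abs_of_nonneg (sq_nonneg (r.eval t))] at this
    refine this.trans ?_
    gcongr
    exact le_max_left _ _
  · have := h2 t
    rw [abs_of_pos (hw0 t), hwe, eval_pow, abs_of_nonneg (sq_nonneg (r.eval t))] at this
    refine this.trans ?_
    gcongr
    exact le_max_right _ _

lemma homeo_pos (p : Polynomial ℝ) (hodd : Odd p.natDegree) (t₀ : ℝ)
    (ht₀ : ∀ t : ℝ, p.derivative.eval t = 0 ↔ t = t₀) (hl : 0 < p.leadingCoeff) :
    ∃ e : ℝ ≃ₜ ℝ, ∀ t, e t = p.eval t := by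
  have hd0 : p.natDegree ≠ 0 := by rintro h; simp [h] at hodd
  have hd1 : p.natDegree ≠ 1 := by
    intro h
    have h1 : p.derivative.natDegree = 0 := by rw [natDegree_derivative, h]
    rw [natDegree_eq_zero] at h1
    obtain ⟨c, hc⟩ := h1
    have h2 := (ht₀ t₀).2 rfl
    have h3 := (ht₀ (t₀+1))
    rw [← hc] at h2 h3
    simp at h2 h3
    exact h3 h2
  have hpd : 0 < p.degree := natDegree_pos_iff_degree_pos.1 (by omega)
  have hpd' : 0 < p.derivative.degree := natDegree_pos_iff_degree_pos.1 (by
    rw [natDegree_derivative]; omega)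
  have heven : Even p.derivative.natDegree := by
    rw [natDegree_derivative]; obtain ⟨x, hx⟩ := hodd; exact ⟨x, by omega⟩
  have hl' : 0 < p.derivative.leadingCoeff := by
    rw [leadingCoeff_derivative]; positivity
  have T1 := p.tendsto_atTop_of_leadingCoeff_nonneg hpd hl.le
  have T2 := p.derivative.tendsto_atTop_of_leadingCoeff_nonneg hpd' hl'.le
  have T3 : Tendsto (fun x => p.derivative.eval x) atBot atTop := by
    have := (p.derivative.comp (-X)).tendsto_atTop_of_leadingCoeff_nonneg (by simpa using hpd')
      (by rw [leadingCoeff_comp (by simp)]; simp only [leadingCoeff_neg, leadingCoeff_X, heven.neg_one_pow, mul_one]; exact hl'.le)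
    simpa [Function.comp_def] using this.comp tendsto_neg_atBot_atTop
  have T4 : Tendsto (fun x => p.eval x) atBot atBot := by
    have := (p.comp (-X)).tendsto_atBot_of_leadingCoeff_nonpos (by simpa using hpd)
      (by rw [leadingCoeff_comp (by simp)]; simp [hodd.neg_one_pow, hl.le])
    simpa [Function.comp_def] using this.comp tendsto_neg_atBot_atTop
  have hcd : Continuous (fun x => p.derivative.eval x) := p.derivative.continuous
  have hpos : ∀ t, t ≠ t₀ → 0 < p.derivative.eval t := by
    intro t ht
    by_contra hn
    have hn : p.derivative.eval t < 0 := lt_of_le_of_ne (not_lt.1 hn) (fun h => ht ((ht₀ t).1 h))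
    rcases lt_or_gt_of_ne ht with h | h
    · obtain ⟨b, hb1, hb2⟩ := ((T3.eventually_ge_atTop 0).and (eventually_le_atBot t)).exists
      obtain ⟨x, hx, hx'⟩ := intermediate_value_Icc' hb2 hcd.continuousOn ⟨hn.le, hb1⟩
      have := (ht₀ x).1 hx'
      linarith [hx.2]
    · obtain ⟨b, hb1, hb2⟩ := ((T2.eventually_ge_atTop 0).and (eventually_ge_atTop t)).exists
      obtain ⟨x, hx, hx'⟩ := intermediate_value_Icc hb2 hcd.continuousOn ⟨hn.le, hb1⟩
      have := (ht₀ x).1 hx'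
      linarith [hx.1]
  have hmono : StrictMono (fun x => p.eval x) := by
    apply StrictMonoOn.Iic_union_Ici (a := t₀)
    · apply strictMonoOn_of_deriv_pos (convex_Iic _) p.continuous.continuousOn
      intro x hx
      rw [interior_Iic] at hx
      rw [Polynomial.deriv]; exact hpos x (ne_of_lt hx)
    · apply strictMonoOn_of_deriv_pos (convex_Ici _) p.continuous.continuousOn
      intro x hx
      rw [interior_Ici] at hx
      rw [Polynomial.deriv]; exact hpos x (ne_of_gt hx)
  have hsurj := Continuous.surjective p.continuous T1 T4
  exact ⟨(StrictMono.orderIsoOfSurjective _ hmono hsurj).toHomeomorph, fun t => rfl⟩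

lemma homeo_all (p : Polynomial ℝ) (hodd : Odd p.natDegree) (t₀ : ℝ)
    (ht₀ : ∀ t : ℝ, p.derivative.eval t = 0 ↔ t = t₀) :
    ∃ e : ℝ ≃ₜ ℝ, ∀ t, e t = p.eval t := by
  have hp0 : p.leadingCoeff ≠ 0 := by
    rw [Ne, leadingCoeff_eq_zero]; rintro rfl; simp at hodd
  rcases lt_or_gt_of_ne hp0 with h | h
  · obtain ⟨e, he⟩ := homeo_pos (-p) (by simpa using hodd) t₀ (by simpa using ht₀) (by simpa using h)
    exact ⟨e.trans (Homeomorph.neg ℝ), fun t => by simp [he]⟩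
  · exact homeo_pos p hodd t₀ ht₀ h

lemma iter_eq (p : Polynomial ℝ) (n : ℕ) :
    iteratedDeriv n (fun x => p.eval x) = fun x => (derivative^[n] p).eval x := by
  induction n with
  | zero => simp
  | succ n ih =>
    rw [iteratedDeriv_succ, ih, Function.iterate_succ_apply']
    ext x
    rw [Polynomial.deriv]

lemma multAt_eq (p : Polynomial ℝ) (t₀ : ℝ) (hp : p - C (p.eval t₀) ≠ 0) :
    multAt (fun x => p.eval x) t₀ = (p - C (p.eval t₀)).rootMultiplicity t₀ := by
  set F := p - C (p.eval t₀) with hF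
  have hFt : F.IsRoot t₀ := by simp [hF]
  have hpos : 0 < F.rootMultiplicity t₀ := (rootMultiplicity_pos hp).2 hFt
  have hit : ∀ n, 1 ≤ n → (derivative^[n] F) = derivative^[n] p := by
    intro n hn
    obtain ⟨n, rfl⟩ := Nat.exists_eq_add_of_le' hn
    rw [Function.iterate_succ_apply, Function.iterate_succ_apply]
    simp [hF]
  have hmem : F.rootMultiplicity t₀ ∈ {k : ℕ | 1 ≤ k ∧ iteratedDeriv k (fun x => p.eval x) t₀ ≠ 0} := by
    refine ⟨hpos, fun h => ?_⟩
    rw [iter_eq, ← hit _ hpos] at h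
    have := (lt_rootMultiplicity_iff_isRoot_iterate_derivative (n := F.rootMultiplicity t₀) (t := t₀) hp).2 ?_
    · exact lt_irrefl _ this
    · intro m hm
      rcases hm.lt_or_eq with h' | h'
      · exact isRoot_iterate_derivative_of_lt_rootMultiplicity h'
      · rw [h']; exact h
  apply le_antisymm (Nat.sInf_le hmem)
  apply le_csInf ⟨_, hmem⟩
  rintro n ⟨hn, hn'⟩
  by_contra hlt
  push Not at hlt
  apply hn'
  rw [iter_eq, ← hit n hn]
  exact isRoot_iterate_derivative_of_lt_rootMultiplicity hlt

lemma nonvan (F : Polynomial ℝ) (t₀ : ℝ) (h0 : F ≠ 0) (hF : ∀ t, F.eval t = 0 → t = t₀) :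
    ∃ u : Polynomial ℝ, (∀ t, F.eval t = (t - t₀)^(F.rootMultiplicity t₀) * u.eval t) ∧
      (∀ t, u.eval t ≠ 0) ∧ F.rootMultiplicity t₀ + u.natDegree = F.natDegree := by
  obtain ⟨u, hu, hnd⟩ := exists_eq_pow_rootMultiplicity_mul_and_not_dvd F h0 t₀
  have hu0 : u ≠ 0 := by rintro rfl; simp at hnd
  have hev : ∀ t, F.eval t = (t - t₀)^(F.rootMultiplicity t₀) * u.eval t := by
    intro t; conv_lhs => rw [hu]
    simp
  refine ⟨u, hev, ?_, ?_⟩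
  · intro t ht
    have h1 := hF t (by rw [hev, ht, mul_zero])
    subst h1
    exact hnd (dvd_iff_isRoot.2 ht)
  · conv_rhs => rw [hu]
    rw [natDegree_mul (pow_ne_zero _ (X_sub_C_ne_zero _)) hu0, natDegree_pow, natDegree_X_sub_C, mul_one]

lemma good_of (p : Polynomial ℝ) (d : ℕ) (hodd : Odd d) (hp : p.natDegree = d) (t₀ : ℝ) (k : ℕ)
    (ht₀ : ∀ t : ℝ, p.derivative.eval t = 0 ↔ t = t₀)
    (hkf : multAt (fun x => p.eval x) t₀ = k) :
    PolyGood p t₀ (k-1) (d-k) := by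
  obtain ⟨e, he⟩ := homeo_all p (hp ▸ hodd) t₀ ht₀
  set F := p - C (p.eval t₀) with hF
  have hFd : F.natDegree = d := by rw [hF, natDegree_sub_C, hp]
  have hd0 : d ≠ 0 := by rintro rfl; simp at hodd
  have hF0 : F ≠ 0 := by intro h; rw [h] at hFd; simp at hFd; omega
  have hFt : F.IsRoot t₀ := by simp [hF]
  have hk : F.rootMultiplicity t₀ = k := by rw [← hkf, multAt_eq p t₀ hF0]
  have hk1 : 1 ≤ k := by rw [← hk]; exact (rootMultiplicity_pos hF0).2 hFt
  have hder : F.derivative = p.derivative := by simp [hF]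
  have hk' : p.derivative.rootMultiplicity t₀ = k - 1 := by
    rw [← hder, derivative_rootMultiplicity_of_root hFt, hk]
  have hp'0 : p.derivative ≠ 0 := by
    intro h
    have := (ht₀ (t₀+1)).1 (by simp [h])
    linarith
  obtain ⟨u, hu, hu0, hud⟩ := nonvan F t₀ hF0 (by
    intro t ht
    apply e.injective
    rw [he, he]
    simpa [hF, sub_eq_zero] using ht)
  obtain ⟨v, hv, hv0, hvd⟩ := nonvan p.derivative t₀ hp'0 (fun t => (ht₀ t).1)
  rw [hk] at hu hud
  rw [hk'] at hv hvd
  rw [natDegree_derivative, hp] at hvd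
  obtain ⟨C1, hC1, h1⟩ := poly_two u (d-k) t₀ hu0 (by omega)
  obtain ⟨C2, hC2, h2⟩ := poly_two v (d-k) t₀ hv0 (by omega)
  refine ⟨max C1 C2, by positivity, fun t => ?_⟩
  have e1 : p.eval t - p.eval t₀ = (t-t₀)^k * u.eval t := by rw [← hu]; simp [hF]
  have hkk : k - 1 + 1 = k := by omega
  rw [e1, hv, hkk, mul_pow, mul_pow, ← pow_mul, ← pow_mul, mul_comm k, mul_comm (k-1)]
  have a1 : 0 ≤ (t-t₀)^(2*k) := by rw [pow_mul]; positivity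
  have a2 : 0 ≤ (t-t₀)^(2*(k-1)) := by rw [pow_mul]; positivity
  have m1 := le_max_left C1 C2
  have m2 := le_max_right C1 C2
  rw [mul_left_comm (max C1 C2), mul_left_comm (max C1 C2), mul_left_comm (max C1 C2), mul_left_comm (max C1 C2)]
  refine ⟨?_, ?_, ?_, ?_⟩
  · refine mul_le_mul_of_nonneg_left ((h1 t).1.trans ?_) a1; gcongr
  · refine mul_le_mul_of_nonneg_left ((h1 t).2.trans ?_) a1; gcongr
  · refine mul_le_mul_of_nonneg_left ((h2 t).1.trans ?_) a2; gcongr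
  · refine mul_le_mul_of_nonneg_left ((h2 t).2.trans ?_) a2; gcongr

end Helpers

/-- Two polynomial functions of the same odd degree `d ≥ 1`, each with exactly one
critical point, of the same multiplicity `k`, and with values of the same sign at the
critical points, are Lipschitz equivalent. -/
theorem stmt_3 (p q : Polynomial ℝ) (d : ℕ) (hd : 1 ≤ d) (hodd : Odd d)
    (hp : p.natDegree = d) (hq : q.natDegree = d)
    (t₀ s₀ : ℝ) (k : ℕ)
    (ht₀ : ∀ t : ℝ, p.derivative.eval t = 0 ↔ t = t₀)
    (hs₀ : ∀ t : ℝ, q.derivative.eval t = 0 ↔ t = s₀)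
    (hkf : multAt (fun x => p.eval x) t₀ = k)
    (hkg : multAt (fun x => q.eval x) s₀ = k)
    (hsign : (0 < p.eval t₀ ∧ 0 < q.eval s₀) ∨ (p.eval t₀ < 0 ∧ q.eval s₀ < 0) ∨
      (p.eval t₀ = 0 ∧ q.eval s₀ = 0)) :
    LipschitzEquivFun (fun x => p.eval x) (fun x => q.eval x) := by
  have hc : ∃ c : ℝ, 0 < c ∧ c * p.eval t₀ = q.eval s₀ := by
    rcases hsign with ⟨h1, h2⟩ | ⟨h1, h2⟩ | ⟨h1, h2⟩
    · exact ⟨q.eval s₀ / p.eval t₀, div_pos h2 h1, by field_simp⟩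
    · exact ⟨q.eval s₀ / p.eval t₀, div_pos_of_neg_of_neg h2 h1, div_mul_cancel₀ _ h1.ne⟩
    · exact ⟨1, one_pos, by rw [h1, h2, mul_zero]⟩
  obtain ⟨c, hc, hcs⟩ := hc
  obtain ⟨e, he⟩ := homeo_all p (hp ▸ hodd) t₀ ht₀
  obtain ⟨e', he'⟩ := homeo_all q (hq ▸ hodd) s₀ hs₀
  have gp := good_of p d hodd hp t₀ k ht₀ hkf
  have gq := good_of q d hodd hq s₀ k hs₀ hkg
  have ip : Function.Injective (fun t => p.eval t) := by
    intro a b h; apply e.injective; rw [he, he]; exact h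
  have iq : Function.Injective (fun t => q.eval t) := by
    intro a b h; apply e'.injective; rw [he', he']; exact h
  have L1 := lip_aux p q t₀ s₀ c hc _ _ gp gq hs₀ hcs ip e' he'
  have L2 := lip_aux q p s₀ t₀ c⁻¹ (inv_pos.2 hc) _ _ gq gp ht₀
    (by rw [← hcs]; field_simp) iq e he
  have hl : Function.LeftInverse (fun t => e.symm (c⁻¹ * q.eval t)) (fun t => e'.symm (c * p.eval t)) := by
    intro t
    simp only
    rw [← he', Homeomorph.apply_symm_apply, inv_mul_cancel_left₀ hc.ne', ← he, Homeomorph.symm_apply_apply]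
  have hr : Function.RightInverse (fun t => e.symm (c⁻¹ * q.eval t)) (fun t => e'.symm (c * p.eval t)) := by
    intro t
    simp only
    rw [← he, Homeomorph.apply_symm_apply, mul_inv_cancel_left₀ hc.ne', ← he', Homeomorph.symm_apply_apply]
  refine ⟨fun t => e'.symm (c * p.eval t), ⟨hl.injective, hr.surjective⟩, L1, ?_, c, hc, ?_⟩
  · have : Function.invFun (fun t => e'.symm (c * p.eval t)) = fun t => e.symm (c⁻¹ * q.eval t) := by
      funext s
      apply hl.injective
      exact (Function.invFun_eq (hr.surjective s)).trans (hr s).symm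
    rw [this]; exact L2
  · intro t
    simp only
    rw [← he', Homeomorph.apply_symm_apply]
end

section
/- Let f, g : ℝ → ℝ be real polynomial functions of the same even degree d ≥ 1. Suppose f has exactly one critical point t₀, with multiplicity k, and g has exactly one critical point s₀, with the same multiplicity k, and that f(t₀) and g(s₀) have the same sign (both positive, both negative, or both zero). Then f and g are Lipschitz equivalent if and only if t₀ and s₀ are either both global minimum points of f and g respectively, or both global maximum points of f and g respectively. -/
open Filter Topology

open Polynomial in
lemma aux_dom (W V : ℝ[X]) (hW : ∀ x, 0 ≤ x → 0 < W.eval x) (hV : ∀ x, 0 ≤ x → 0 < V.eval x)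
    (hdeg : W.natDegree = V.natDegree) :
    ∃ A : ℝ, 0 < A ∧ ∀ x, 0 ≤ x → W.eval x ≤ A * V.eval x := by
  have hW0 : W ≠ 0 := by rintro rfl; simpa using hW 0 le_rfl
  have hV0 : V ≠ 0 := by rintro rfl; simpa using hV 0 le_rfl
  have hd : W.degree = V.degree := by
    rw [degree_eq_natDegree hW0, degree_eq_natDegree hV0, hdeg]
  have ht := Polynomial.div_tendsto_atTop_leadingCoeff_div_of_degree_eq W V hd
  have he := ht.eventually (eventually_le_nhds (lt_add_one (W.leadingCoeff / V.leadingCoeff)))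
  obtain ⟨N, hN⟩ := eventually_atTop.1 he
  have hc : ContinuousOn (fun x => W.eval x / V.eval x) (Set.Icc 0 (max N 0)) := by
    apply ContinuousOn.div W.continuous.continuousOn V.continuous.continuousOn
    intro x hx; exact (hV x hx.1).ne'
  obtain ⟨B, hB⟩ := isCompact_Icc.bddAbove_image hc
  refine ⟨max 1 (max B (W.leadingCoeff / V.leadingCoeff + 1)), by positivity, fun x hx => ?_⟩
  rw [← div_le_iff₀ (hV x hx)]
  rcases le_total x (max N 0) with h | h
  · exact (hB ⟨x, ⟨hx, h⟩, rfl⟩).trans ((le_max_left _ _).trans (le_max_right _ _))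
  · exact (hN x ((le_max_left _ _).trans h)).trans ((le_max_right _ _).trans (le_max_right _ _))

open Polynomial in
lemma aux_mono (R : ℝ[X]) (h : ∀ x, 0 ≤ x → 0 ≤ R.derivative.eval x) {u v : ℝ} (hu : 0 ≤ u)
    (huv : u ≤ v) : R.eval u ≤ R.eval v := by
  have : MonotoneOn (fun x => R.eval x) (Set.Ici 0) := by
    apply monotoneOn_of_deriv_nonneg (convex_Ici 0) R.continuous.continuousOn
      R.differentiable.differentiableOn
    intro x hx
    rw [Polynomial.deriv]
    exact h x (interior_subset hx)
  exact this hu (hu.trans huv) huv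

lemma aux_pow_up (m : ℕ) {x y : ℝ} (hx : 0 ≤ x) (hxy : x ≤ y) :
    y ^ (m+1) - x ^ (m+1) ≤ (m+1) * y ^ m * (y - x) := by
  induction m with
  | zero => simp
  | succ m ih =>
    have h1 : x ^ (m+1) ≤ y ^ (m+1) := pow_le_pow_left₀ hx hxy _
    have h2 : y * (y ^ (m+1) - x ^ (m+1)) ≤ y * ((m+1) * y ^ m * (y - x)) :=
      mul_le_mul_of_nonneg_left ih (hx.trans hxy)
    have h3 : x ^ (m+1) * (y - x) ≤ y ^ (m+1) * (y - x) :=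
      mul_le_mul_of_nonneg_right h1 (by linarith)
    have e : y ^ (m+1+1) - x ^ (m+1+1) = y * (y ^ (m+1) - x ^ (m+1)) + x ^ (m+1) * (y - x) := by ring
    rw [e]; push_cast
    have e2 : ((m:ℝ)+1+1) * y ^ (m+1) * (y - x) = y * ((m+1) * y ^ m * (y - x)) + y ^ (m+1) * (y - x) := by ring
    rw [e2]; linarith

lemma aux_pow_lo (m : ℕ) {x y : ℝ} (hx : 0 ≤ x) (hxy : x ≤ y) :
    y ^ m * (y - x) ≤ y ^ (m+1) - x ^ (m+1) := by
  have h1 : x * x ^ m ≤ x * y ^ m := mul_le_mul_of_nonneg_left (pow_le_pow_left₀ hx hxy _) hx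
  have e : y ^ (m+1) - x ^ (m+1) - y ^ m * (y - x) = x * y ^ m - x * x ^ m := by ring
  linarith

/-- comparison with the model -/
def AuxCmp (m n : ℕ) (P : ℝ → ℝ) : Prop :=
  P 0 = 0 ∧ Continuous P ∧ ∃ a A : ℝ, 0 < a ∧ 0 < A ∧ ∀ u v : ℝ, 0 ≤ u → u ≤ v →
    a * ((v ^ (m+1) + v ^ (n+1)) - (u ^ (m+1) + u ^ (n+1))) ≤ P v - P u ∧
    P v - P u ≤ A * ((v ^ (m+1) + v ^ (n+1)) - (u ^ (m+1) + u ^ (n+1)))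

lemma AuxCmp.strict {m n : ℕ} {P : ℝ → ℝ} (h : AuxCmp m n P) {u v : ℝ} (hu : 0 ≤ u)
    (huv : u < v) : P u < P v := by
  obtain ⟨_, _, a, A, ha, _, h⟩ := h
  have h1 := (h u v hu huv.le).1
  have h2 : u ^ (m+1) < v ^ (m+1) := pow_lt_pow_left₀ huv hu (by omega)
  have h3 : u ^ (n+1) < v ^ (n+1) := pow_lt_pow_left₀ huv hu (by omega)
  have : 0 < a * ((v ^ (m+1) + v ^ (n+1)) - (u ^ (m+1) + u ^ (n+1))) :=
    mul_pos ha (by linarith)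
  linarith

lemma AuxCmp.inj {m n : ℕ} {P : ℝ → ℝ} (h : AuxCmp m n P) {u v : ℝ} (hu : 0 ≤ u) (hv : 0 ≤ v)
    (huv : P u = P v) : u = v := by
  rcases lt_trichotomy u v with h1 | h1 | h1
  · exact absurd huv (h.strict hu h1).ne
  · exact h1
  · exact absurd huv (h.strict hv h1).ne'

lemma AuxCmp.surj {m n : ℕ} {P : ℝ → ℝ} (h : AuxCmp m n P) {y : ℝ} (hy : 0 ≤ y) :
    ∃ z, 0 ≤ z ∧ P z = y := by
  obtain ⟨h0, hc, a, A, ha, _, h⟩ := h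
  set M := max 1 (y / a) with hM
  have hM1 : 1 ≤ M := le_max_left _ _
  have hM2 : y ≤ a * M := by
    have : y / a ≤ M := le_max_right _ _
    rw [div_le_iff₀ ha] at this; linarith
  have h1 := (h 0 M le_rfl (by linarith)).1
  have h2 : M ≤ M ^ (m+1) := le_self_pow₀ hM1 (by omega)
  have h3 : 0 ≤ M ^ (n+1) := by positivity
  have h4 : a * M ≤ a * ((M ^ (m+1) + M ^ (n+1)) - (0 ^ (m+1) + 0 ^ (n+1))) := by
    apply mul_le_mul_of_nonneg_left _ ha.le
    simp; linarith
  have h5 : y ≤ P M := by linarith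
  obtain ⟨z, hz, hz2⟩ := intermediate_value_Icc (by linarith : (0:ℝ) ≤ M) hc.continuousOn
    (⟨by rw [h0]; exact hy, h5⟩ : y ∈ Set.Icc (P 0) (P M))
  exact ⟨z, hz.1, hz2⟩

lemma AuxCmp.exists_map {m n : ℕ} (hmn : m ≤ n) {P Q : ℝ → ℝ} (hP : AuxCmp m n P)
    (hQ : AuxCmp m n Q) : ∃ φ : ℝ → ℝ, φ 0 = 0 ∧ (∀ x, 0 ≤ x → 0 ≤ φ x) ∧
    (∀ x, 0 < x → 0 < φ x) ∧
    (∀ x, 0 ≤ x → Q (φ x) = P x) ∧ ∃ K : ℝ, 0 ≤ K ∧ ∀ x y, 0 ≤ x → x ≤ y →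
      |φ y - φ x| ≤ K * (y - x) := by
  have hPnn : ∀ x, 0 ≤ x → 0 ≤ P x := by
    intro x hx
    rcases hx.eq_or_lt with rfl | hx
    · exact hP.1.ge
    · have := hP.strict le_rfl hx; rw [hP.1] at this; exact this.le
  have hex : ∀ x : ℝ, ∃ z : ℝ, 0 ≤ x → (0 ≤ z ∧ Q z = P x) := by
    intro x
    by_cases hx : 0 ≤ x
    · obtain ⟨z, hz⟩ := hQ.surj (hPnn x hx); exact ⟨z, fun _ => hz⟩
    · exact ⟨0, fun h => absurd h hx⟩
  choose φ hφ using hex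
  have hφ0 : φ 0 = 0 := hQ.inj (hφ 0 le_rfl).1 le_rfl (by rw [(hφ 0 le_rfl).2, hP.1, hQ.1])
  have hmono : ∀ x y, 0 ≤ x → x ≤ y → φ x ≤ φ y := by
    intro x y hx hxy
    by_contra hcon
    push Not at hcon
    have h1 := hQ.strict (hφ y (hx.trans hxy)).1 hcon
    rw [(hφ y (hx.trans hxy)).2, (hφ x hx).2] at h1
    rcases hxy.eq_or_lt with rfl | h
    · exact lt_irrefl _ h1
    · exact lt_asymm h1 (hP.strict hx h)
  refine ⟨φ, hφ0, fun x hx => (hφ x hx).1, ?_, fun x hx => (hφ x hx).2, ?_⟩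
  · intro x hx
    refine lt_of_le_of_ne (hφ x hx.le).1 fun h => ?_
    have := (hφ x hx.le).2
    rw [← h, hQ.1, ← hP.1] at this
    exact (hP.strict le_rfl hx).ne this
  obtain ⟨hP0, _, a, A, ha, hA, hPc⟩ := hP
  obtain ⟨hQ0, _, b, B, hb, hB, hQc⟩ := hQ
  set M := max 1 (B / a) with hM
  have hM1 : 1 ≤ M := le_max_left _ _
  have hM2 : B ≤ a * M := by
    have : B / a ≤ M := le_max_right _ _
    rw [div_le_iff₀ ha] at this; linarith
  have hcmp : ∀ y, 0 ≤ y → y ≤ M * φ y := by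
    intro y hy
    by_contra hcon
    push Not at hcon
    obtain ⟨hz, hzQ⟩ := hφ y hy
    set z := φ y
    have h1 := (hPc 0 y le_rfl hy).1
    have h2 := (hQc 0 z le_rfl hz).2
    simp only [ne_eq, Nat.add_eq_zero_iff, one_ne_zero, and_false, not_false_eq_true, zero_pow,
      add_zero, sub_zero, hP0, hQ0] at h1 h2
    have hMz : 0 ≤ M * z := by positivity
    have h3 : (M * z) ^ (m+1) < y ^ (m+1) := pow_lt_pow_left₀ hcon hMz (by omega)
    have h4 : (M * z) ^ (n+1) < y ^ (n+1) := pow_lt_pow_left₀ hcon hMz (by omega)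
    rw [mul_pow] at h3 h4
    have h5 : M * z ^ (m+1) ≤ M ^ (m+1) * z ^ (m+1) :=
      mul_le_mul_of_nonneg_right (le_self_pow₀ hM1 (by omega)) (by positivity)
    have h6 : M * z ^ (n+1) ≤ M ^ (n+1) * z ^ (n+1) :=
      mul_le_mul_of_nonneg_right (le_self_pow₀ hM1 (by omega)) (by positivity)
    have h7 : a * (M * (z ^ (m+1) + z ^ (n+1))) < a * (y ^ (m+1) + y ^ (n+1)) :=
      mul_lt_mul_of_pos_left (by linarith) ha
    have h8 : B * (z ^ (m+1) + z ^ (n+1)) ≤ a * M * (z ^ (m+1) + z ^ (n+1)) :=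
      mul_le_mul_of_nonneg_right hM2 (by positivity)
    linarith
  refine ⟨A * (n+1) * M ^ n / b, by positivity, fun x y hx hxy => ?_⟩
  have hy := hx.trans hxy
  have hwz := hmono x y hx hxy
  obtain ⟨hz, hzQ⟩ := hφ y hy
  obtain ⟨hw, hwQ⟩ := hφ x hx
  have hyz := hcmp y hy
  set z := φ y
  set w := φ x
  rw [abs_of_nonneg (by linarith)]
  rcases hz.eq_or_lt with hz0 | hz0
  · have : 0 ≤ A * (n+1) * M ^ n / b * (y - x) := mul_nonneg (by positivity) (by linarith)
    linarith
  have hh : 0 < z ^ m + z ^ n := by positivity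
  have h1 := (hQc w z hw hwz).1
  have h2 := (hPc x y hx hxy).2
  have h3 := aux_pow_lo m hw hwz
  have h4 := aux_pow_lo n hw hwz
  have h5 := aux_pow_up m hx hxy
  have h6 := aux_pow_up n hx hxy
  have hmn' : (m:ℝ) ≤ n := by exact_mod_cast hmn
  have hyx : 0 ≤ y - x := by linarith
  have h7 : y ^ m ≤ M ^ n * z ^ m := by
    calc y ^ m ≤ (M * z) ^ m := pow_le_pow_left₀ hy hyz _
      _ = M ^ m * z ^ m := mul_pow _ _ _
      _ ≤ M ^ n * z ^ m := mul_le_mul_of_nonneg_right (pow_le_pow_right₀ hM1 hmn) (by positivity)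
  have h8 : y ^ n ≤ M ^ n * z ^ n := by
    calc y ^ n ≤ (M * z) ^ n := pow_le_pow_left₀ hy hyz _
      _ = M ^ n * z ^ n := mul_pow _ _ _
  have h9 : y ^ (m+1) - x ^ (m+1) ≤ (n+1) * (M ^ n * z ^ m) * (y - x) := by
    refine h5.trans ?_
    gcongr
  have h10 : y ^ (n+1) - x ^ (n+1) ≤ (n+1) * (M ^ n * z ^ n) * (y - x) := by
    refine h6.trans ?_
    gcongr
  have h11 : b * ((z ^ m + z ^ n) * (z - w)) ≤
      A * ((n+1) * M ^ n * (y - x) * (z ^ m + z ^ n)) := by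
    calc b * ((z ^ m + z ^ n) * (z - w))
        ≤ b * (z ^ (m+1) + z ^ (n+1) - (w ^ (m+1) + w ^ (n+1))) := by
          apply mul_le_mul_of_nonneg_left _ hb.le; linarith
      _ ≤ A * (y ^ (m+1) + y ^ (n+1) - (x ^ (m+1) + x ^ (n+1))) := by linarith
      _ ≤ _ := by
          apply mul_le_mul_of_nonneg_left _ hA.le; linarith
  have h12 : b * (z - w) ≤ A * ((n+1) * M ^ n * (y - x)) := by
    apply le_of_mul_le_mul_right _ hh
    linarith
  rw [div_mul_eq_mul_div, le_div_iff₀ hb]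
  linarith

open Polynomial in
lemma aux_pos (P : ℝ[X]) (h0 : P.eval 0 = 0) (hmin : ∀ x, 0 ≤ P.eval x)
    (hcr : ∀ x, 0 < x → P.derivative.eval x ≠ 0) : ∀ x, 0 < x → 0 < P.derivative.eval x := by
  intro x hx
  by_contra hcon
  have hneg : P.derivative.eval x < 0 := lt_of_le_of_ne (not_lt.1 hcon) (hcr x hx)
  obtain ⟨c, hc, hc2⟩ := exists_deriv_eq_slope (fun x => P.eval x) hx P.continuous.continuousOn
    P.differentiable.differentiableOn
  rw [Polynomial.deriv, h0] at hc2
  have h1 : 0 ≤ P.derivative.eval c := by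
    rw [hc2]; have := hmin x; apply div_nonneg <;> linarith
  obtain ⟨z, hz, hz2⟩ := intermediate_value_Icc' hc.2.le P.derivative.continuous.continuousOn
    (⟨hneg.le, h1⟩ : (0:ℝ) ∈ Set.Icc (P.derivative.eval x) (P.derivative.eval c))
  exact hcr z (hc.1.trans_le hz.1) hz2

open Polynomial in
lemma aux_cmp (P U : ℝ[X]) (m n : ℕ) (hmn : m ≤ n) (hdeg : P.natDegree = n+1)
    (hU : P = X ^ (m+1) * U) (hU0 : U.eval 0 ≠ 0) (hmin : ∀ x, 0 ≤ P.eval x)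
    (hcr : ∀ x, 0 < x → P.derivative.eval x ≠ 0) : AuxCmp m n (fun x => P.eval x) := by
  have h0 : P.eval 0 = 0 := by rw [hU]; simp
  have hpos := aux_pos P h0 hmin hcr
  set W : ℝ[X] := C ((m:ℝ)+1) * U + X * derivative U with hW
  have hPW : derivative P = X ^ m * W := by
    rw [hU, hW, derivative_mul, derivative_X_pow]
    simp only [Nat.add_sub_cancel]
    push_cast
    ring
  have hW0 : W.eval 0 ≠ 0 := by
    rw [hW]; simp only [eval_add, eval_mul, eval_C, eval_X, zero_mul, add_zero]
    exact mul_ne_zero (by positivity) hU0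
  have hWpos' : ∀ x, 0 < x → 0 < W.eval x := by
    intro x hx
    have := hpos x hx
    rw [hPW, eval_mul, eval_pow, eval_X] at this
    exact (pos_iff_pos_of_mul_pos this).1 (by positivity)
  have hWpos : ∀ x, 0 ≤ x → 0 < W.eval x := by
    intro x hx
    rcases hx.eq_or_lt with rfl | hx
    · refine lt_of_le_of_ne ?_ hW0.symm
      have ht : Tendsto (fun x => W.eval x) (𝓝[>] 0) (𝓝 (W.eval 0)) :=
        (W.continuous.tendsto 0).mono_left nhdsWithin_le_nhds
      refine ge_of_tendsto ht ?_
      filter_upwards [self_mem_nhdsWithin] with x hx using (hWpos' x hx).le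
    · exact hWpos' x hx
  set H : ℝ[X] := X ^ (m+1) + X ^ (n+1) with hH
  set V : ℝ[X] := C ((n:ℝ)+1) * X ^ (n - m) + C ((m:ℝ)+1) with hV
  have hHV : derivative H = X ^ m * V := by
    obtain ⟨l, rfl⟩ := Nat.exists_eq_add_of_le hmn
    rw [hH, hV, derivative_add, derivative_X_pow, derivative_X_pow]
    simp only [Nat.add_sub_cancel, Nat.add_sub_cancel_left]
    push_cast
    ring
  have hVpos : ∀ x, 0 ≤ x → 0 < V.eval x := by
    intro x hx
    rw [hV]; simp only [eval_add, eval_mul, eval_C, eval_X, eval_pow]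
    positivity
  have hVdeg : V.natDegree = n - m := by
    rw [hV, natDegree_add_C, natDegree_C_mul_X_pow _ _ (by positivity)]
  have hWdeg : W.natDegree = n - m := by
    have h1 := natDegree_derivative P
    have hWne : W ≠ 0 := by rintro h; rw [h] at hW0; simp at hW0
    rw [hPW, natDegree_mul (by simp) hWne, natDegree_X_pow, hdeg] at h1
    omega
  obtain ⟨A, hA, hA2⟩ := aux_dom W V hWpos hVpos (by rw [hVdeg, hWdeg])
  obtain ⟨B, hB, hB2⟩ := aux_dom V W hVpos hWpos (by rw [hVdeg, hWdeg])
  have hHe : ∀ x, H.eval x = x ^ (m+1) + x ^ (n+1) := by intro x; simp [hH]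
  refine ⟨h0, P.continuous, B⁻¹, A, by positivity, hA, fun u v hu huv => ⟨?_, ?_⟩⟩
  · have := aux_mono (C B * P - H) (fun x hx => by
      rw [derivative_sub, derivative_C_mul, hPW, hHV]
      simp only [eval_sub, eval_mul, eval_C, eval_pow, eval_X]
      have := mul_le_mul_of_nonneg_left (hB2 x hx) (pow_nonneg hx m)
      linarith) hu huv
    simp only [eval_sub, eval_mul, eval_C, hHe] at this
    rw [inv_mul_le_iff₀ hB]
    linarith
  · have := aux_mono (C A * H - P) (fun x hx => by
      rw [derivative_sub, derivative_C_mul, hPW, hHV]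
      simp only [eval_sub, eval_mul, eval_C, eval_pow, eval_X]
      have := mul_le_mul_of_nonneg_left (hA2 x hx) (pow_nonneg hx m)
      linarith) hu huv
    simp only [eval_sub, eval_mul, eval_C, hHe] at this
    linarith

lemma aux_lip_s4 (Φ : ℝ → ℝ) (K : ℝ) (hK : 0 ≤ K)
    (h : ∀ x y, x ≤ y → |Φ y - Φ x| ≤ K * (y - x)) : LipschitzWith ⟨K, hK⟩ Φ := by
  apply LipschitzWith.of_dist_le_mul
  intro x y
  rw [Real.dist_eq, Real.dist_eq]
  change _ ≤ K * _
  rcases le_total x y with hxy | hxy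
  · rw [abs_sub_comm, abs_sub_comm x y, abs_of_nonneg (by linarith : 0 ≤ y - x)]; exact h x y hxy
  · rw [abs_of_nonneg (by linarith : 0 ≤ x - y)]; exact h y x hxy

lemma aux_glue {m n : ℕ} (hmn : m ≤ n) {P Q : ℝ → ℝ} (hP : AuxCmp m n P)
    (hQ : AuxCmp m n Q) (hP' : AuxCmp m n (fun x => P (-x))) (hQ' : AuxCmp m n (fun x => Q (-x))) :
    ∃ Φ : ℝ → ℝ, (∀ x, 0 ≤ x → 0 ≤ Φ x) ∧ (∀ x, x < 0 → Φ x < 0) ∧ (∀ x, Q (Φ x) = P x) ∧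
      ∃ K : NNReal, LipschitzWith K Φ := by
  obtain ⟨φ, h0, hnn, hpos, hQP, K, hK, hL⟩ := hP.exists_map hmn hQ
  obtain ⟨ψ, h0', hnn', hpos', hQP', K', hK', hL'⟩ := hP'.exists_map hmn hQ'
  refine ⟨fun x => if 0 ≤ x then φ x else - ψ (-x), ?_, ?_, ?_, ⟨max K K', by positivity⟩, ?_⟩
  · intro x hx; simp [hx, hnn]
  · intro x hx; simp [not_le.2 hx, hpos' (-x) (by linarith)]
  · intro x
    by_cases hx : 0 ≤ x
    · simp [hx, hQP]
    · have := hQP' (-x) (by linarith)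
      simp only [neg_neg] at this
      simp [hx, this]
  · apply aux_lip_s4
    intro x y hxy
    have h1 : K ≤ max K K' := le_max_left _ _
    have h2 : K' ≤ max K K' := le_max_right _ _
    by_cases hx : 0 ≤ x
    · have hy := hx.trans hxy
      simp only [hx, hy, if_true]
      exact (hL x y hx hxy).trans (mul_le_mul_of_nonneg_right h1 (by linarith))
    · by_cases hy : 0 ≤ y
      · simp only [hx, hy, if_true, if_false]
        have a1 := hL 0 y le_rfl hy
        have a2 := hL' 0 (-x) le_rfl (by linarith)
        rw [h0, sub_zero] at a1
        rw [h0', sub_zero] at a2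
        have a3 : K * (y - 0) ≤ max K K' * (y - 0) := mul_le_mul_of_nonneg_right h1 (by linarith)
        have a4 : K' * (-x - 0) ≤ max K K' * (-x - 0) :=
          mul_le_mul_of_nonneg_right h2 (by linarith)
        have a5 := abs_add_le (φ y) (ψ (-x))
        rw [sub_neg_eq_add]
        linarith
      · simp only [hx, hy, if_false]
        have a2 := hL' (-y) (-x) (by linarith) (by linarith)
        have a4 : K' * (-x - -y) ≤ max K K' * (-x - -y) :=
          mul_le_mul_of_nonneg_right h2 (by linarith)
        have e : - ψ (-y) - - ψ (-x) = ψ (-x) - ψ (-y) := by ring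
        rw [e]; linarith

lemma aux_inj {m n : ℕ} {P : ℝ → ℝ} (hP : AuxCmp m n P) (hP' : AuxCmp m n (fun x => P (-x)))
    {x y : ℝ} (hxy : (0 ≤ x ∧ 0 ≤ y) ∨ (x < 0 ∧ y < 0)) (h : P x = P y) : x = y := by
  rcases hxy with ⟨hx, hy⟩ | ⟨hx, hy⟩
  · exact hP.inj hx hy h
  · have := hP'.inj (u := -x) (v := -y) (by linarith) (by linarith) (by simpa using h)
    linarith

open Polynomial in
lemma aux_cmp2 (p : ℝ[X]) (t₀ c : ℝ) (hc : 0 < c) (m n : ℕ) (hmn : m ≤ n)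
    (hdeg : p.natDegree = n+1)
    (ht₀ : ∀ t : ℝ, p.derivative.eval t = 0 ↔ t = t₀)
    (hco : ∀ j, 1 ≤ j → j < m+1 → (taylor t₀ p).coeff j = 0)
    (hco' : (taylor t₀ p).coeff (m+1) ≠ 0)
    (hmin : ∀ t, p.eval t₀ ≤ p.eval t) :
    AuxCmp m n (fun x => c * (p.eval (x + t₀) - p.eval t₀)) ∧
    AuxCmp m n (fun x => c * (p.eval (-x + t₀) - p.eval t₀)) := by
  set P : ℝ[X] := C c * (taylor t₀ p - C (p.eval t₀)) with hPdef
  have hPe : ∀ x, P.eval x = c * (p.eval (x + t₀) - p.eval t₀) := by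
    intro x; simp [hPdef, taylor_eval]
  have hPd : P.natDegree = n + 1 := by
    rw [hPdef, natDegree_C_mul hc.ne', natDegree_sub_C, natDegree_taylor, hdeg]
  have hdvd : X ^ (m+1) ∣ P := by
    rw [X_pow_dvd_iff]
    intro j hj
    rcases Nat.eq_zero_or_pos j with rfl | hj0
    · simp [hPdef, taylor_coeff_zero]
    · rw [hPdef, coeff_C_mul, coeff_sub, hco j hj0 hj, coeff_C_ne_zero (by omega)]; simp
  obtain ⟨U, hU⟩ := hdvd
  have hU0 : U.eval 0 ≠ 0 := by
    have h1 : P.coeff (m+1) = U.coeff 0 := by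
      rw [hU]; have := coeff_X_pow_mul U (m+1) 0; rwa [zero_add] at this
    rw [← coeff_zero_eq_eval_zero, ← h1, hPdef, coeff_C_mul, coeff_sub, coeff_C_ne_zero (by omega),
      sub_zero]
    exact mul_ne_zero hc.ne' hco'
  have hPder : ∀ x, P.derivative.eval x = c * p.derivative.eval (x + t₀) := by
    intro x
    simp [hPdef, taylor_apply, derivative_comp]
  have hPmin : ∀ x, 0 ≤ P.eval x := by
    intro x; rw [hPe]; exact mul_nonneg hc.le (by linarith [hmin (x + t₀)])
  have hPcr : ∀ x, x ≠ 0 → P.derivative.eval x ≠ 0 := by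
    intro x hx h
    rw [hPder] at h
    rcases mul_eq_zero.1 h with h | h
    · exact hc.ne' h
    · rw [ht₀] at h; exact hx (by linarith)
  constructor
  · have := aux_cmp P U m n hmn hPd hU hU0 hPmin (fun x hx => hPcr x hx.ne')
    simpa only [hPe] using this
  · have := aux_cmp (P.comp (-X)) (C ((-1) ^ (m+1)) * U.comp (-X)) m n hmn
      (by rw [natDegree_comp, natDegree_neg, natDegree_X, hPd, mul_one])
      (by rw [hU, mul_comp, pow_comp, X_comp, neg_pow]; simp only [map_pow, map_neg, map_one]; ring)
      (by simpa [eval_comp] using hU0)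
      (by intro x; rw [eval_comp]; exact hPmin _)
      (by intro x hx
          have := hPcr (-x) (by linarith)
          simpa [derivative_comp, eval_comp] using this)
    simpa only [eval_comp, eval_neg, eval_X, hPe] using this

open Polynomial in
lemma aux_main (p q : ℝ[X]) (t₀ s₀ c : ℝ) (hc : 0 < c) (hcv : q.eval s₀ = c * p.eval t₀)
    (m n : ℕ) (hmn : m ≤ n)
    (hp : p.natDegree = n+1) (hq : q.natDegree = n+1)
    (ht₀ : ∀ t : ℝ, p.derivative.eval t = 0 ↔ t = t₀)
    (hs₀ : ∀ t : ℝ, q.derivative.eval t = 0 ↔ t = s₀)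
    (hco : ∀ j, 1 ≤ j → j < m+1 → (taylor t₀ p).coeff j = 0)
    (hco' : (taylor t₀ p).coeff (m+1) ≠ 0)
    (hcq : ∀ j, 1 ≤ j → j < m+1 → (taylor s₀ q).coeff j = 0)
    (hcq' : (taylor s₀ q).coeff (m+1) ≠ 0)
    (hmin : ∀ t, p.eval t₀ ≤ p.eval t) (hmin' : ∀ t, q.eval s₀ ≤ q.eval t) :
    LipschitzEquivFun (fun x => p.eval x) (fun x => q.eval x) := by
  obtain ⟨hP, hP'⟩ := aux_cmp2 p t₀ c hc m n hmn hp ht₀ hco hco' hmin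
  obtain ⟨hQ, hQ'⟩ := aux_cmp2 q s₀ 1 one_pos m n hmn hq hs₀ hcq hcq' hmin'
  obtain ⟨Φ, h1, h2, h3, K, hK⟩ := aux_glue hmn hP hQ hP' hQ'
  obtain ⟨Ψ, g1, g2, g3, L, hL⟩ := aux_glue hmn hQ hP hQ' hP'
  have hΨΦ : ∀ x, Ψ (Φ x) = x := by
    intro x
    refine aux_inj hP hP' ?_ (by rw [g3, h3])
    rcases le_or_gt 0 x with hx | hx
    · exact Or.inl ⟨g1 _ (h1 x hx), hx⟩
    · exact Or.inr ⟨g2 _ (h2 x hx), hx⟩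
  have hΦΨ : ∀ x, Φ (Ψ x) = x := by
    intro x
    refine aux_inj hQ hQ' ?_ (by rw [h3, g3])
    rcases le_or_gt 0 x with hx | hx
    · exact Or.inl ⟨h1 _ (g1 x hx), hx⟩
    · exact Or.inr ⟨h2 _ (g2 x hx), hx⟩
  set φ : ℝ → ℝ := fun t => Φ (t - t₀) + s₀ with hφ
  set ψ : ℝ → ℝ := fun t => Ψ (t - s₀) + t₀ with hψ
  have hl : Function.LeftInverse ψ φ := by intro t; simp [hφ, hψ, hΨΦ]
  have hr : Function.RightInverse ψ φ := by intro t; simp [hφ, hψ, hΦΨ]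
  have hinv : Function.invFun φ = ψ := by
    funext t
    apply hl.injective
    rw [Function.rightInverse_invFun hr.surjective t, hr t]
  refine ⟨φ, ⟨hl.injective, hr.surjective⟩, ⟨K, ?_⟩, ⟨L, ?_⟩, c, hc, ?_⟩
  · apply LipschitzWith.of_dist_le_mul
    intro x y
    have := hK.dist_le_mul (x - t₀) (y - t₀)
    simpa [hφ] using this
  · rw [hinv]
    apply LipschitzWith.of_dist_le_mul
    intro x y
    have := hL.dist_le_mul (x - s₀) (y - s₀)
    simpa [hψ] using this
  · intro t
    have := h3 (t - t₀)
    simp only [one_mul, sub_add_cancel] at this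
    simp only [hφ]
    linarith

open Polynomial in
lemma aux_mult (p : ℝ[X]) (t₀ : ℝ) (k : ℕ) (hd : 1 ≤ p.natDegree)
    (hk : multAt (fun x => p.eval x) t₀ = k) :
    1 ≤ k ∧ k ≤ p.natDegree ∧ (∀ j, 1 ≤ j → j < k → (taylor t₀ p).coeff j = 0) ∧
      (taylor t₀ p).coeff k ≠ 0 := by
  have hit : ∀ j, iteratedDeriv j (fun x => p.eval x) = fun x => (derivative^[j] p).eval x := by
    intro j
    induction j with
    | zero => simp
    | succ j ih =>
      rw [iteratedDeriv_succ, ih, Function.iterate_succ_apply']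
      funext x
      rw [Polynomial.deriv]
  have hiff : ∀ j, iteratedDeriv j (fun x => p.eval x) t₀ ≠ 0 ↔ (taylor t₀ p).coeff j ≠ 0 := by
    intro j
    rw [hit, taylor_coeff, ← factorial_smul_hasseDeriv]
    simp [Nat.factorial_ne_zero]
  have hset : {k : ℕ | 1 ≤ k ∧ iteratedDeriv k (fun x => p.eval x) t₀ ≠ 0} =
      {k : ℕ | 1 ≤ k ∧ (taylor t₀ p).coeff k ≠ 0} := by
    ext j; simp only [Set.mem_setOf_eq, hiff]
  rw [multAt, hset] at hk
  have hmem : p.natDegree ∈ {k : ℕ | 1 ≤ k ∧ (taylor t₀ p).coeff k ≠ 0} := by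
    refine ⟨hd, ?_⟩
    rw [← natDegree_taylor p t₀]
    change (taylor t₀ p).leadingCoeff ≠ 0
    rw [leadingCoeff_ne_zero]
    intro h
    have := natDegree_taylor p t₀
    rw [h, natDegree_zero] at this
    omega
  have h1 := Nat.sInf_mem ⟨_, hmem⟩
  have h2 := Nat.sInf_le hmem
  rw [hk] at h1 h2
  refine ⟨h1.1, h2, fun j hj hjk => ?_, h1.2⟩
  by_contra hcon
  have := Nat.sInf_le (show j ∈ {k : ℕ | 1 ≤ k ∧ (taylor t₀ p).coeff k ≠ 0} from ⟨hj, hcon⟩)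
  omega

open Polynomial in
lemma aux_ext (p : ℝ[X]) (t₀ : ℝ) (hd : 1 ≤ p.natDegree) (he : Even p.natDegree)
    (ht₀ : ∀ t : ℝ, p.derivative.eval t = 0 ↔ t = t₀) (hl : 0 < p.leadingCoeff) :
    (∀ t, p.eval t₀ ≤ p.eval t) ∧ ∀ M : ℝ, ∃ t, M < p.eval t := by
  have h1 : Tendsto (fun x => p.eval x) atTop atTop :=
    p.tendsto_atTop_of_leadingCoeff_nonneg (natDegree_pos_iff_degree_pos.1 hd) hl.le
  have h2 : Tendsto (fun x => (p.comp (-X)).eval x) atTop atTop := by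
    apply tendsto_atTop_of_leadingCoeff_nonneg
    · apply natDegree_pos_iff_degree_pos.1
      rw [natDegree_comp, natDegree_neg, natDegree_X, mul_one]; exact hd
    · rw [comp_neg_X_leadingCoeff_eq, he.neg_one_pow, one_mul]; exact hl.le
  have h3 : Tendsto (fun x => p.eval x) atBot atTop := by
    have := h2.comp tendsto_neg_atBot_atTop
    refine this.congr fun x => ?_
    simp [eval_comp]
  constructor
  · obtain ⟨x, hx⟩ := p.continuous.exists_forall_le
      (by rw [cocompact_eq_atBot_atTop]; exact h3.sup h1)
    have hx0 : x = t₀ := by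
      rw [← ht₀, ← Polynomial.deriv]
      exact IsLocalMin.deriv_eq_zero (Filter.Eventually.of_forall hx)
    rw [← hx0]; exact hx
  · intro M
    exact (h1.eventually_gt_atTop M).exists

/-- Two polynomial functions of the same even degree `d ≥ 1`, each with exactly one
critical point, of the same multiplicity `k`, and with values of the same sign at the
critical points, are Lipschitz equivalent iff the critical points are both global
minimum points or both global maximum points. -/
theorem stmt_4 (p q : Polynomial ℝ) (d : ℕ) (hd : 1 ≤ d) (heven : Even d)
    (hp : p.natDegree = d) (hq : q.natDegree = d)
    (t₀ s₀ : ℝ) (k : ℕ)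
    (ht₀ : ∀ t : ℝ, p.derivative.eval t = 0 ↔ t = t₀)
    (hs₀ : ∀ t : ℝ, q.derivative.eval t = 0 ↔ t = s₀)
    (hkf : multAt (fun x => p.eval x) t₀ = k)
    (hkg : multAt (fun x => q.eval x) s₀ = k)
    (hsign : (0 < p.eval t₀ ∧ 0 < q.eval s₀) ∨ (p.eval t₀ < 0 ∧ q.eval s₀ < 0) ∨
      (p.eval t₀ = 0 ∧ q.eval s₀ = 0)) :
    LipschitzEquivFun (fun x => p.eval x) (fun x => q.eval x) ↔
      ((∀ t : ℝ, p.eval t₀ ≤ p.eval t) ∧ (∀ t : ℝ, q.eval s₀ ≤ q.eval t)) ∨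
      ((∀ t : ℝ, p.eval t ≤ p.eval t₀) ∧ (∀ t : ℝ, q.eval t ≤ q.eval s₀)) := by
  constructor
  · rintro ⟨φ, -, -, -, c, hc, h⟩
    simp only at h
    have hpl : p.leadingCoeff ≠ 0 := by
      rw [Polynomial.leadingCoeff_ne_zero]; rintro rfl; simp at hp; omega
    have hql : q.leadingCoeff ≠ 0 := by
      rw [Polynomial.leadingCoeff_ne_zero]; rintro rfl; simp at hq; omega
    have hp1 : p.leadingCoeff < 0 → _ := fun hl => aux_ext (-p) t₀ (by rw [Polynomial.natDegree_neg]; omega)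
      (by rw [Polynomial.natDegree_neg, hp]; exact heven) (by simpa using ht₀)
      (by rw [Polynomial.leadingCoeff_neg]; linarith)
    have hq1 : q.leadingCoeff < 0 → _ := fun hl => aux_ext (-q) s₀ (by rw [Polynomial.natDegree_neg]; omega)
      (by rw [Polynomial.natDegree_neg, hq]; exact heven) (by simpa using hs₀)
      (by rw [Polynomial.leadingCoeff_neg]; linarith)
    have hp2 := aux_ext p t₀ (by omega) (hp ▸ heven) ht₀
    have hq2 := aux_ext q s₀ (by omega) (hq ▸ heven) hs₀
    simp only [Polynomial.eval_neg, neg_le_neg_iff] at hp1 hq1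
    rcases lt_or_gt_of_ne hpl with h1 | h1 <;> rcases lt_or_gt_of_ne hql with h2 | h2
    · exact Or.inr ⟨(hp1 h1).1, (hq1 h2).1⟩
    · exfalso
      obtain ⟨t, ht⟩ := (hp1 h1).2 (-(q.eval s₀) / c)
      rw [div_lt_iff₀ hc] at ht
      have := (hq2 h2).1 (φ t)
      rw [h] at this
      linarith
    · exfalso
      obtain ⟨t, ht⟩ := (hp2 h1).2 ((q.eval s₀) / c)
      rw [div_lt_iff₀ hc] at ht
      have := (hq1 h2).1 (φ t)
      rw [h] at this
      linarith
    · exact Or.inl ⟨(hp2 h1).1, (hq2 h2).1⟩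
  · intro hmm
    obtain ⟨c, hc, hcv⟩ : ∃ c : ℝ, 0 < c ∧ q.eval s₀ = c * p.eval t₀ := by
      rcases hsign with ⟨h1, h2⟩ | ⟨h1, h2⟩ | ⟨h1, h2⟩
      · exact ⟨q.eval s₀ / p.eval t₀, div_pos h2 h1, by field_simp⟩
      · exact ⟨q.eval s₀ / p.eval t₀, div_pos_of_neg_of_neg h2 h1, by
          have := h1.ne
          field_simp⟩
      · exact ⟨1, one_pos, by rw [h1, h2]; simp⟩
    obtain ⟨k1, kd, hco, hco'⟩ := aux_mult p t₀ k (by omega) hkf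
    obtain ⟨-, -, hcq, hcq'⟩ := aux_mult q s₀ k (by omega) hkg
    obtain ⟨m, rfl⟩ : ∃ m, k = m + 1 := ⟨k - 1, by omega⟩
    obtain ⟨n, rfl⟩ : ∃ n, d = n + 1 := ⟨d - 1, by omega⟩
    have hmn : m ≤ n := by omega
    rcases hmm with ⟨h1, h2⟩ | ⟨h1, h2⟩
    · exact aux_main p q t₀ s₀ c hc hcv m n hmn hp hq ht₀ hs₀ hco hco' hcq hcq' h1 h2
    · obtain ⟨φ, a1, a2, a3, c', hc', a4⟩ := aux_main (-p) (-q) t₀ s₀ c hc (by simp [hcv]) m n hmn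
        (by rwa [Polynomial.natDegree_neg]) (by rwa [Polynomial.natDegree_neg])
        (by simpa using ht₀) (by simpa using hs₀)
        (by simpa using hco) (by simpa using hco') (by simpa using hcq) (by simpa using hcq')
        (by simpa using h1) (by simpa using h2)
      refine ⟨φ, a1, a2, a3, c', hc', fun t => ?_⟩
      have := a4 t
      simp only [Polynomial.eval_neg] at this
      simp only
      linarith
end

section
/- Let f, g : ℝ → ℝ be real polynomial functions of the same degree d ≥ 1, each having exactly the same number p ≥ 2 of critical points. Then f and g are Lipschitz equivalent if and only if their multiplicity symbols are similar. -/
open Filter Topology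

open Polynomial in
lemma aux_multAt (P : ℝ[X]) (hP : P.derivative ≠ 0) (x : ℝ) :
    multAt (fun x => P.eval x) x = P.derivative.rootMultiplicity x + 1 := by
  have hit : ∀ k : ℕ, ∀ x, iteratedDeriv k (fun x => P.eval x) x = (derivative^[k] P).eval x := by
    intro k
    induction k with
    | zero => intro x; simp
    | succ k ih =>
      intro x
      rw [iteratedDeriv_succ, funext ih, Polynomial.deriv, Function.iterate_succ_apply']
  unfold multAt
  have hset : ∀ k, (∀ m, m < k → (derivative^[m] P.derivative).IsRoot x) ↔
      k ≤ P.derivative.rootMultiplicity x := by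
    intro k
    rcases k with _ | k
    · simp
    · rw [Nat.succ_le_iff, lt_rootMultiplicity_iff_isRoot_iterate_derivative hP]
      simp
  set n := P.derivative.rootMultiplicity x with hn
  have h1 : iteratedDeriv (n+1) (fun x => P.eval x) x ≠ 0 := by
    rw [hit, Function.iterate_succ_apply]
    intro h0
    have := (hset (n+1)).1 (fun m hm => by
      rcases Nat.lt_succ_iff_lt_or_eq.1 hm with h | h
      · exact (hset n).2 le_rfl m h
      · subst h; exact h0)
    omega
  apply le_antisymm
  · exact Nat.sInf_le ⟨by omega, h1⟩
  · refine le_csInf (Set.nonempty_of_mem (x := n+1) ⟨by omega, h1⟩) ?_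
    rintro k ⟨hk, hk0⟩
    by_contra hlt
    obtain ⟨k, rfl⟩ : ∃ j, k = j + 1 := ⟨k-1, by omega⟩
    apply hk0
    rw [hit, Function.iterate_succ_apply]
    exact (hset n).2 le_rfl k (by omega)

lemma aux_mono_s5 (f : ℝ → ℝ) (hf : Continuous f) (S : Finset ℝ) :
    ∀ D : Set ℝ, Convex ℝ D → (∀ x ∈ interior D, x ∉ S → ∃ f', 0 ≤ f' ∧ HasDerivAt f f' x) →
      MonotoneOn f D := by
  classical
  induction S using Finset.induction_on with
  | empty =>
    intro D hD h
    apply monotoneOn_of_deriv_nonneg hD hf.continuousOn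
    · intro x hx
      obtain ⟨f', _, h2⟩ := h x hx (by simp)
      exact h2.differentiableAt.differentiableWithinAt
    · intro x hx
      obtain ⟨f', h1, h2⟩ := h x hx (by simp)
      rw [h2.deriv]; exact h1
  | insert a S ha ih =>
    intro D hD h
    have h1 : MonotoneOn f (D ∩ Set.Iic a) := by
      apply ih _ (hD.inter (convex_Iic a))
      intro x hx hxS
      rw [interior_inter, interior_Iic] at hx
      refine h x hx.1 ?_
      have := hx.2
      simp only [Set.mem_Iio] at this
      simp [this.ne, hxS]
    have h2 : MonotoneOn f (D ∩ Set.Ici a) := by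
      apply ih _ (hD.inter (convex_Ici a))
      intro x hx hxS
      rw [interior_inter, interior_Ici] at hx
      refine h x hx.1 ?_
      have := hx.2
      simp only [Set.mem_Ioi] at this
      simp [this.ne', hxS]
    intro x hx y hy hxy
    rcases le_total y a with hya | hya
    · exact h1 ⟨hx, hxy.trans hya⟩ ⟨hy, hya⟩ hxy
    · rcases le_total x a with hxa | hxa
      · have haD : a ∈ D := hD.ordConnected.out hx hy ⟨hxa, hya⟩
        exact (h1 ⟨hx, hxa⟩ ⟨haD, Set.mem_Iic.2 le_rfl⟩ hxa).trans (h2 ⟨haD, Set.mem_Ici.2 le_rfl⟩ ⟨hy, hya⟩ hya)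
      · exact h2 ⟨hx, hxa⟩ ⟨hy, hya⟩ hxy

lemma aux_mono' (f : ℝ → ℝ) (hf : Continuous f) (S : Finset ℝ)
    (h : ∀ x, x ∉ S → ∃ f', 0 ≤ f' ∧ HasDerivAt f f' x) : Monotone f := by
  rw [← monotoneOn_univ]
  exact aux_mono_s5 f hf S _ convex_univ (fun x _ => h x)

lemma aux_deriv (φ F H : ℝ → ℝ) (hφ : Continuous φ) (hinj : Function.Injective φ)
    (hc : ∀ x, H (φ x) = F x) (x f h : ℝ) (hF : HasDerivAt F f x) (hH : HasDerivAt H h (φ x))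
    (hh : h ≠ 0) : HasDerivAt φ (f / h) x := by
  rw [hasDerivAt_iff_tendsto_slope] at *
  have ht : Tendsto φ (𝓝[≠] x) (𝓝[≠] (φ x)) := by
    apply tendsto_nhdsWithin_of_tendsto_nhds_of_eventually_within
    · exact (hφ.tendsto x).mono_left nhdsWithin_le_nhds
    · filter_upwards [self_mem_nhdsWithin] with y hy
      exact fun h => hy (hinj h)
  have h2 := hF.div (hH.comp ht) hh
  refine h2.congr' ?_
  have hne : ∀ᶠ y in 𝓝[≠] x, slope H (φ x) (φ y) ≠ 0 := (hH.comp ht).eventually_ne hh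
  filter_upwards [self_mem_nhdsWithin, hne] with y hy hy2
  have hy' : y - x ≠ 0 := sub_ne_zero.2 hy
  have hy3 : φ y - φ x ≠ 0 := sub_ne_zero.2 (fun h => hy (hinj h))
  simp only [Pi.div_apply, Function.comp, slope_def_field, hc] at *
  have hy4 : F y - F x ≠ 0 := fun h => hy2 (by simp [h])
  field_simp

open Polynomial in
lemma aux_ne (P : ℝ[X]) (x : ℝ) (hP : P.derivative ≠ 0) :
    ∃ A B : ℝ[X], A.eval x ≠ 0 ∧ B.eval x ≠ 0 ∧
      (∀ y, P.derivative.eval y = (y - x) ^ (P.derivative.rootMultiplicity x) * A.eval y) ∧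
      (∀ y, P.eval y - P.eval x = (y - x) ^ (P.derivative.rootMultiplicity x + 1) * B.eval y) := by
  have h0 : P - C (P.eval x) ≠ 0 := by
    intro h
    apply hP
    have := congrArg derivative h
    simpa using this
  have hr : (P - C (P.eval x)).IsRoot x := by simp
  obtain ⟨A, hA, hA'⟩ := exists_eq_pow_rootMultiplicity_mul_and_not_dvd _ hP x
  obtain ⟨B, hB, hB'⟩ := exists_eq_pow_rootMultiplicity_mul_and_not_dvd _ h0 x
  have hm : rootMultiplicity x (P - C (P.eval x)) = P.derivative.rootMultiplicity x + 1 := by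
    have h1 := derivative_rootMultiplicity_of_root hr
    have h2 := (rootMultiplicity_pos h0).2 hr
    simp only [derivative_sub, derivative_C, sub_zero] at h1
    omega
  rw [dvd_iff_isRoot] at hA' hB'
  refine ⟨A, B, hA', hB', fun y => ?_, fun y => ?_⟩
  · conv_lhs => rw [hA]
    simp
  · have := congrArg (eval y) hB
    rw [hm] at this
    simpa using this

lemma aux_cmp_s5 (a b : ℝ → ℝ) (x : ℝ) (ha : ContinuousAt a x) (hb : ContinuousAt b x)
    (hbx : 0 < b x) : ∃ C : ℝ, 0 < C ∧ ∀ᶠ y in 𝓝 x, a y ≤ C * b y := by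
  refine ⟨|a x| / b x + 1, by positivity, ?_⟩
  have h1 : a x < (|a x| / b x + 1) * b x := by
    rw [add_mul, div_mul_cancel₀ _ hbx.ne']
    linarith [le_abs_self (a x)]
  have h2 : ContinuousAt (fun y => (|a x| / b x + 1) * b y) x := by fun_prop
  filter_upwards [ha.eventually_lt h2 h1] with y hy
  exact hy.le

open Polynomial in
lemma aux_loc (P : ℝ[X]) (x : ℝ) (hP : P.derivative ≠ 0) (m : ℕ)
    (hm : m = P.derivative.rootMultiplicity x) :
    ∃ C : ℝ, 0 < C ∧ ∀ᶠ y in 𝓝 x,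
      |P.derivative.eval y| ^ (m+1) ≤ C * |P.eval y - P.eval x| ^ m ∧
      |P.eval y - P.eval x| ^ m ≤ C * |P.derivative.eval y| ^ (m+1) := by
  obtain ⟨A, B, hA, hB, h1, h2⟩ := aux_ne P x hP
  rw [← hm] at h1 h2
  have hAc : ContinuousAt (fun y => |A.eval y| ^ (m+1)) x := by fun_prop
  have hBc : ContinuousAt (fun y => |B.eval y| ^ m) x := by fun_prop
  obtain ⟨C1, hC1, e1⟩ := aux_cmp_s5 _ _ x hAc hBc (by positivity)
  obtain ⟨C2, hC2, e2⟩ := aux_cmp_s5 _ _ x hBc hAc (by positivity)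
  refine ⟨C1 + C2, by positivity, ?_⟩
  filter_upwards [e1, e2] with y h3 h4
  rw [h1, h2, abs_mul, abs_mul, abs_pow, abs_pow, mul_pow, mul_pow, ← pow_mul, ← pow_mul,
    mul_comm (m+1) m]
  have hp : 0 ≤ |y - x| ^ (m * (m+1)) := by positivity
  have ha : 0 ≤ |A.eval y| ^ (m+1) := by positivity
  have hb : 0 ≤ |B.eval y| ^ m := by positivity
  constructor
  · have : |A.eval y| ^ (m+1) ≤ (C1 + C2) * |B.eval y| ^ m := by nlinarith
    calc _ ≤ |y - x| ^ (m * (m+1)) * ((C1 + C2) * |B.eval y| ^ m) := by gcongr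
      _ = _ := by ring
  · have : |B.eval y| ^ m ≤ (C1 + C2) * |A.eval y| ^ (m+1) := by nlinarith
    calc _ ≤ |y - x| ^ (m * (m+1)) * ((C1 + C2) * |A.eval y| ^ (m+1)) := by gcongr
      _ = _ := by ring

lemma aux_pow (m : ℕ) (a b z C1 C2 : ℝ) (ha : 0 ≤ a) (hb : 0 ≤ b) (h1 : 0 ≤ C1) (h2 : 0 ≤ C2)
    (e1 : a ^ (m+1) ≤ C1 * z) (e2 : z ≤ C2 * b ^ (m+1)) : a ≤ (C1 * C2 + 1) * b := by
  have hK : 1 ≤ C1 * C2 + 1 := by nlinarith [mul_nonneg h1 h2]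
  have hbp : 0 ≤ b ^ (m+1) := by positivity
  rw [← pow_le_pow_iff_left₀ ha (by positivity) (Nat.succ_ne_zero m), Nat.succ_eq_add_one, mul_pow]
  calc a ^ (m+1) ≤ C1 * z := e1
    _ ≤ C1 * (C2 * b ^ (m+1)) := by gcongr
    _ ≤ (C1 * C2 + 1) * b ^ (m+1) := by nlinarith
    _ ≤ (C1 * C2 + 1) ^ (m+1) * b ^ (m+1) := by
      gcongr
      exact le_self_pow₀ hK (Nat.succ_ne_zero m)

open Polynomial in
lemma aux_inf (P : ℝ[X]) (m : ℕ) (hP : P.natDegree = m + 1) (l : Filter ℝ)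
    (hl : l = atTop ∨ l = atBot) :
    ∃ C : ℝ, 0 < C ∧ ∀ᶠ y in l,
      |P.derivative.eval y| ^ (m+1) ≤ C * |P.eval y| ^ m ∧
      |P.eval y| ^ m ≤ C * |P.derivative.eval y| ^ (m+1) := by
  have hP0 : P ≠ 0 := by rintro rfl; simp at hP
  have hP1 : P.derivative ≠ 0 := by rw [Ne, derivative_eq_zero]; omega
  have hdeg : (P.derivative ^ (m+1)).degree = (P ^ m).degree := by
    rw [degree_eq_natDegree (pow_ne_zero _ hP1), degree_eq_natDegree (pow_ne_zero _ hP0),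
      natDegree_pow, natDegree_pow, natDegree_derivative, hP]
    congr 1
    simp [mul_comm]
  have hO : (P.derivative ^ (m+1)).eval =O[l] (P ^ m).eval ∧
      (P ^ m).eval =O[l] (P.derivative ^ (m+1)).eval := by
    rcases hl with rfl | rfl
    · exact ⟨isBigO_atTop_of_degree_le _ _ hdeg.le, isBigO_atTop_of_degree_le _ _ hdeg.ge⟩
    · exact ⟨isBigO_atBot_of_degree_le _ _ hdeg.le, isBigO_atBot_of_degree_le _ _ hdeg.ge⟩
  obtain ⟨C1, hC1, e1⟩ := hO.1.exists_pos
  obtain ⟨C2, hC2, e2⟩ := hO.2.exists_pos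
  refine ⟨C1 + C2, by positivity, ?_⟩
  filter_upwards [e1.bound, e2.bound] with y h3 h4
  simp only [eval_pow, norm_pow, Real.norm_eq_abs] at h3 h4
  have ha : 0 ≤ |P.derivative.eval y| ^ (m+1) := by positivity
  have hb : 0 ≤ |P.eval y| ^ m := by positivity
  constructor <;> nlinarith

open Polynomial in
lemma aux_bound_s5 (P Q : ℝ[X]) (m : ℕ) (hP : P.natDegree = m + 1) (hQ : Q.natDegree = m + 1)
    (φ : ℝ ≃o ℝ) (hφ : ∀ x, Q.eval (φ x) = P.eval x)
    (hm : ∀ x, Q.derivative.rootMultiplicity (φ x) = P.derivative.rootMultiplicity x) :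
    ∃ K : ℝ, 0 ≤ K ∧ ∀ x, |P.derivative.eval x| ≤ K * |Q.derivative.eval (φ x)| := by
  have hP1 : P.derivative ≠ 0 := by rw [Ne, derivative_eq_zero]; omega
  have hQ1 : Q.derivative ≠ 0 := by rw [Ne, derivative_eq_zero]; omega
  have hloc : ∀ x, ∃ K : ℝ, 0 ≤ K ∧ ∀ᶠ y in 𝓝 x,
      |P.derivative.eval y| ≤ K * |Q.derivative.eval (φ y)| := by
    intro x
    obtain ⟨C1, hC1, e1⟩ := aux_loc P x hP1 _ rfl
    obtain ⟨C2, hC2, e2⟩ := aux_loc Q (φ x) hQ1 _ (hm x).symm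
    refine ⟨C1 * C2 + 1, by positivity, ?_⟩
    filter_upwards [e1, (φ.continuous.tendsto x).eventually e2] with y h1 h2
    rw [hφ, hφ] at h2
    exact aux_pow _ _ _ _ _ _ (abs_nonneg _) (abs_nonneg _) hC1.le hC2.le h1.1 h2.2
  have hinf : ∀ l : Filter ℝ, (l = atTop ∨ l = atBot) → ∃ K : ℝ, 0 ≤ K ∧ ∀ᶠ y in l,
      |P.derivative.eval y| ≤ K * |Q.derivative.eval (φ y)| := by
    intro l hl
    obtain ⟨C1, hC1, e1⟩ := aux_inf P m hP l hl
    obtain ⟨C2, hC2, e2⟩ := aux_inf Q m hQ l hl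
    refine ⟨C1 * C2 + 1, by positivity, ?_⟩
    have ht : Tendsto φ l l := by
      rcases hl with rfl | rfl
      · exact φ.tendsto_atTop
      · exact φ.tendsto_atBot
    filter_upwards [e1, ht.eventually e2] with y h1 h2
    rw [hφ] at h2
    exact aux_pow _ _ _ _ _ _ (abs_nonneg _) (abs_nonneg _) hC1.le hC2.le h1.1 h2.2
  obtain ⟨K1, hK1, e1⟩ := hinf atTop (Or.inl rfl)
  obtain ⟨K2, hK2, e2⟩ := hinf atBot (Or.inr rfl)
  obtain ⟨b, hb⟩ := eventually_atTop.1 e1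
  obtain ⟨a, ha⟩ := eventually_atBot.1 e2
  obtain ⟨K3, hK3, e3⟩ : ∃ K : ℝ, 0 ≤ K ∧ ∀ y ∈ Set.Icc a b,
      |P.derivative.eval y| ≤ K * |Q.derivative.eval (φ y)| := by
    refine isCompact_Icc.induction_on (p := fun s => ∃ K : ℝ, 0 ≤ K ∧ ∀ y ∈ s,
      |P.derivative.eval y| ≤ K * |Q.derivative.eval (φ y)|) ⟨0, le_rfl, by simp⟩ ?_ ?_ ?_
    · rintro s t hst ⟨K, hK, h⟩
      exact ⟨K, hK, fun y hy => h y (hst hy)⟩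
    · rintro s t ⟨K, hK, h⟩ ⟨K', hK', h'⟩
      refine ⟨K + K', by positivity, fun y hy => ?_⟩
      have := abs_nonneg (Q.derivative.eval (φ y))
      rcases hy with hy | hy
      · nlinarith [h y hy]
      · nlinarith [h' y hy]
    · intro x _
      obtain ⟨K, hK, h⟩ := hloc x
      exact ⟨_, mem_nhdsWithin_of_mem_nhds h, K, hK, fun y hy => hy⟩
  refine ⟨K1 + K2 + K3, by positivity, fun y => ?_⟩
  have := abs_nonneg (Q.derivative.eval (φ y))
  rcases le_total b y with h | h
  · nlinarith [hb y h, mul_nonneg hK2 this, mul_nonneg hK3 this]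
  · rcases le_total y a with h' | h'
    · nlinarith [ha y h', mul_nonneg hK1 this, mul_nonneg hK3 this]
    · nlinarith [e3 y ⟨h', h⟩, mul_nonneg hK1 this, mul_nonneg hK2 this]

open Polynomial in
lemma aux_lip_s5 (P Q : ℝ[X]) (m : ℕ) (hP : P.natDegree = m + 1) (hQ : Q.natDegree = m + 1)
    (φ : ℝ ≃o ℝ) (hφ : ∀ x, Q.eval (φ x) = P.eval x)
    (hm : ∀ x, Q.derivative.rootMultiplicity (φ x) = P.derivative.rootMultiplicity x) :
    ∃ K : NNReal, LipschitzWith K φ := by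
  obtain ⟨K, hK, h⟩ := aux_bound_s5 P Q m hP hQ φ hφ hm
  have hP1 : P.derivative ≠ 0 := by rw [Ne, derivative_eq_zero]; omega
  have hmono : Monotone (fun x => K * x - φ x) := by
    have hc := φ.continuous
    apply aux_mono' _ (by fun_prop) P.derivative.roots.toFinset
    intro x hx
    have hx0 : P.derivative.eval x ≠ 0 := by
      simpa [hP1, -derivative_eq_zero] using hx
    have hy0 : Q.derivative.eval (φ x) ≠ 0 := by
      intro h0
      have := h x
      rw [h0] at this
      simp [hx0] at this
    have hd := aux_deriv φ _ _ hc φ.injective hφ x _ _ (P.hasDerivAt x) (Q.hasDerivAt (φ x)) hy0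
    refine ⟨K - P.derivative.eval x / Q.derivative.eval (φ x), ?_, ?_⟩
    · have h1 : |P.derivative.eval x / Q.derivative.eval (φ x)| ≤ K := by
        rw [abs_div, div_le_iff₀ (abs_pos.2 hy0)]
        exact h x
      linarith [le_abs_self (P.derivative.eval x / Q.derivative.eval (φ x))]
    · simpa using ((hasDerivAt_id x).const_mul K).fun_sub hd
  refine ⟨⟨K, hK⟩, LipschitzWith.of_dist_le_mul ?_⟩
  have key : ∀ x y, x ≤ y → dist (φ x) (φ y) ≤ K * dist x y := by
    intro x y hxy
    have h1 := hmono hxy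
    have h2 := φ.monotone hxy
    simp only at h1
    rw [dist_comm, dist_comm x, Real.dist_eq, Real.dist_eq, abs_of_nonneg (by linarith),
      abs_of_nonneg (by linarith)]
    linarith
  intro x y
  rcases le_total x y with hxy | hxy
  · exact key x y hxy
  · rw [dist_comm, dist_comm x]; exact key y x hxy

open Polynomial in
lemma aux_fwd (P Q : ℝ[X]) (hP : P.derivative ≠ 0) (hQ : Q.derivative ≠ 0)
    (φ : ℝ → ℝ) (K : NNReal) (hL : LipschitzWith K φ) (c : ℝ) (hc : 0 < c)
    (hφ : ∀ x, Q.eval (φ x) = c * P.eval x) (x : ℝ) :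
    Q.derivative.rootMultiplicity (φ x) ≤ P.derivative.rootMultiplicity x := by
  obtain ⟨-, B, -, hB, -, h2⟩ := aux_ne P x hP
  obtain ⟨-, B', -, hB', -, h2'⟩ := aux_ne Q (φ x) hQ
  set m := P.derivative.rootMultiplicity x
  set n := Q.derivative.rootMultiplicity (φ x)
  by_contra hlt
  push Not at hlt
  obtain ⟨k, hk⟩ : ∃ k, n = m + k + 1 := ⟨n - m - 1, by omega⟩
  have hle : ∀ᶠ y in 𝓝[≠] x, c * |B.eval y| ≤ K ^ (n+1) * |y - x| ^ (k+1) * |B'.eval (φ y)| := by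
    filter_upwards [self_mem_nhdsWithin] with y hy
    have hy0 : 0 < |y - x| := abs_pos.2 (sub_ne_zero.2 hy)
    have e : (φ y - φ x) ^ (n+1) * B'.eval (φ y) = c * ((y - x) ^ (m+1) * B.eval y) := by
      rw [← h2, ← h2', hφ, hφ]; ring
    have e' := congrArg abs e
    rw [abs_mul, abs_mul, abs_mul, abs_pow, abs_pow, abs_of_pos hc] at e'
    have hl : |φ y - φ x| ≤ K * |y - x| := by
      simpa [Real.dist_eq] using hL.dist_le_mul y x
    have : |y - x| ^ (m+1) * (c * |B.eval y|) ≤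
        |y - x| ^ (m+1) * (K ^ (n+1) * |y - x| ^ (k+1) * |B'.eval (φ y)|) := by
      calc _ = |φ y - φ x| ^ (n+1) * |B'.eval (φ y)| := by rw [e']; ring
        _ ≤ (K * |y - x|) ^ (n+1) * |B'.eval (φ y)| := by gcongr
        _ = _ := by rw [hk]; ring
    exact le_of_mul_le_mul_left this (by positivity)
  have hφc := hL.continuous
  have t1 : Tendsto (fun y => c * |B.eval y|) (𝓝[≠] x) (𝓝 (c * |B.eval x|)) :=
    (Continuous.tendsto (by fun_prop) x).mono_left nhdsWithin_le_nhds
  have t2 : Tendsto (fun y => K ^ (n+1) * |y - x| ^ (k+1) * |B'.eval (φ y)|) (𝓝[≠] x)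
      (𝓝 (K ^ (n+1) * |x - x| ^ (k+1) * |B'.eval (φ x)|)) :=
    (Continuous.tendsto (f := fun y => (K : ℝ) ^ (n+1) * |y - x| ^ (k+1) * |B'.eval (φ y)|)
      (by fun_prop) x).mono_left nhdsWithin_le_nhds
  have := le_of_tendsto_of_tendsto t1 t2 hle
  simp only [sub_self, abs_zero, ne_eq, Nat.succ_ne_zero, not_false_eq_true, zero_pow,
    mul_zero, zero_mul] at this
  have : 0 < c * |B.eval x| := by positivity
  linarith

open Polynomial in
lemma aux_fact (R : ℝ[X]) (hR : R ≠ 0) (p : ℕ) (t : Fin p → ℝ) (ht : StrictMono t)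
    (htc : ∀ x : ℝ, R.eval x = 0 ↔ ∃ i, x = t i) :
    ∃ A : ℝ[X], (∀ x y, 0 < A.eval x * A.eval y) ∧
      ∀ x, R.eval x = (∏ i, (x - t i) ^ (R.rootMultiplicity (t i))) * A.eval x := by
  classical
  obtain ⟨A, hA, -, hA2⟩ := exists_prod_multiset_X_sub_C_mul R
  have hA0 : A ≠ 0 := by rintro rfl; simp at hA; exact hR hA.symm
  have hne : ∀ x, A.eval x ≠ 0 := by
    intro x hx
    have : x ∈ A.roots := by rw [mem_roots hA0]; exact hx
    rw [hA2] at this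
    simp at this
  have hroots : R.roots.toFinset = Finset.univ.image t := by
    ext x
    simp only [Multiset.mem_toFinset, mem_roots hR, IsRoot.def, htc, Finset.mem_image,
      Finset.mem_univ, true_and, eq_comm]
  rw [prod_multiset_root_eq_finset_root, hroots,
    Finset.prod_image (fun a _ b _ h => ht.injective h)] at hA
  refine ⟨A, ?_, ?_⟩
  · intro x y
    by_contra hcon
    push Not at hcon
    have h0 : A.eval x * A.eval y < 0 := lt_of_le_of_ne hcon (mul_ne_zero (hne x) (hne y))
    have hr : (0 : ℝ) ∈ Set.range (fun z => A.eval z) := by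
      apply mem_range_of_exists_le_of_exists_ge (by fun_prop)
      · rcases mul_neg_iff.1 h0 with h | h
        · exact ⟨y, h.2.le⟩
        · exact ⟨x, h.1.le⟩
      · rcases mul_neg_iff.1 h0 with h | h
        · exact ⟨x, h.1.le⟩
        · exact ⟨y, h.2.le⟩
    obtain ⟨z, hz⟩ := hr
    exact hne z hz
  · intro x
    conv_lhs => rw [← hA]
    simp [eval_prod]

open Polynomial in
lemma aux_sign (R T : ℝ[X]) (hR : R ≠ 0) (hT : T ≠ 0) (p : ℕ) (t s : Fin p → ℝ)
    (ht : StrictMono t) (hs : StrictMono s)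
    (htc : ∀ x : ℝ, R.eval x = 0 ↔ ∃ i, x = t i)
    (hsc : ∀ x : ℝ, T.eval x = 0 ↔ ∃ i, x = s i)
    (hm : ∀ i, T.rootMultiplicity (s i) = R.rootMultiplicity (t i))
    (x y x' y' : ℝ)
    (h : ∀ i, (x < t i ∧ y < s i) ∨ (t i < x ∧ s i < y))
    (h' : ∀ i, (x' < t i ∧ y' < s i) ∨ (t i < x' ∧ s i < y'))
    (hpos : 0 < R.eval x * T.eval y) : 0 < R.eval x' * T.eval y' := by
  obtain ⟨A, hA, eA⟩ := aux_fact R hR p t ht htc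
  obtain ⟨B, hB, eB⟩ := aux_fact T hT p s hs hsc
  have key : ∀ x y, (∀ i, (x < t i ∧ y < s i) ∨ (t i < x ∧ s i < y)) →
      ∃ k : ℝ, 0 < k ∧ R.eval x * T.eval y = k * (A.eval x * B.eval y) := by
    intro x y h
    refine ⟨∏ i, ((x - t i) * (y - s i)) ^ (R.rootMultiplicity (t i)), ?_, ?_⟩
    · apply Finset.prod_pos
      intro i _
      apply pow_pos
      rcases h i with h | h
      · exact mul_pos_of_neg_of_neg (by linarith) (by linarith)
      · exact mul_pos (by linarith) (by linarith)
    · rw [eA, eB]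
      simp only [hm, mul_pow, Finset.prod_mul_distrib]
      ring
  obtain ⟨k, hk, e⟩ := key x y h
  obtain ⟨k', hk', e'⟩ := key x' y' h'
  rw [e']
  rw [e] at hpos
  apply mul_pos hk'
  have h1 := pos_of_mul_pos_right hpos hk.le
  have h2 := mul_pos (hA x x') (hB y y')
  have h3 : 0 < (A.eval x * B.eval y) * (A.eval x' * B.eval y') := by
    calc _ < _ := h2
      _ = _ := by ring
  exact pos_of_mul_pos_right h3 h1.le

lemma aux_pos_s5 (p : ℕ) (t s : Fin p → ℝ) (ht : StrictMono t) (hs : StrictMono s)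
    (i j : Fin p) (hij : (j : ℕ) = i + 1) (x y : ℝ) (h1 : t i < x) (h2 : x < t j)
    (h3 : s i < y) (h4 : y < s j) (k : Fin p) :
    (x < t k ∧ y < s k) ∨ (t k < x ∧ s k < y) := by
  rcases le_or_gt k i with h | h
  · right
    exact ⟨(ht.monotone h).trans_lt h1, (hs.monotone h).trans_lt h3⟩
  · left
    have h : j ≤ k := by
      rw [Fin.le_def]; rw [Fin.lt_def] at h; omega
    exact ⟨h2.trans_le (ht.monotone h), h4.trans_le (hs.monotone h)⟩

open Polynomial in
lemma aux_F (P : ℝ[X]) (hP : P.derivative ≠ 0) (p : ℕ) (t : Fin p → ℝ) (ht : StrictMono t)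
    (htc : ∀ x : ℝ, P.derivative.eval x = 0 ↔ ∃ i, x = t i) (a : ℝ) :
    ∃ F : ℝ ≃o ℝ, (∀ x, HasDerivAt F |P.derivative.eval x| x) ∧ F a = 0 ∧
      ∀ i j : Fin p, (j : ℕ) = i + 1 → F (t j) - F (t i) = |P.eval (t j) - P.eval (t i)| := by
  have hc : Continuous (fun x => |P.derivative.eval x|) := by fun_prop
  have hc' : Continuous (fun x => P.derivative.eval x) := by fun_prop
  set F : ℝ → ℝ := fun x => ∫ y in a..x, |P.derivative.eval y| with hF
  have hint : ∀ u v, IntervalIntegrable (fun x => |P.derivative.eval x|) MeasureTheory.volume u v :=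
    fun u v => hc.intervalIntegrable u v
  have hFsub : ∀ u v, F v - F u = ∫ y in u..v, |P.derivative.eval y| := by
    intro u v
    simp only [hF]
    rw [intervalIntegral.integral_interval_sub_left (hint _ _) (hint _ _)]
  have hFTC : ∀ u v, ∫ y in u..v, P.derivative.eval y = P.eval v - P.eval u := by
    intro u v
    exact intervalIntegral.integral_eq_sub_of_hasDerivAt (fun x _ => P.hasDerivAt x)
      (hc'.intervalIntegrable u v)
  have hder : ∀ x, HasDerivAt F |P.derivative.eval x| x := by
    intro x
    exact intervalIntegral.integral_hasDerivAt_right (hint _ _)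
      (hc.stronglyMeasurableAtFilter _ _) hc.continuousAt
  have hmono : StrictMono F := by
    intro u v huv
    rw [← sub_pos, hFsub]
    apply intervalIntegral.integral_pos huv hc.continuousOn (fun x _ => abs_nonneg _)
    by_contra hcon
    push Not at hcon
    have hsub : Set.Icc u v ⊆ (P.derivative.roots.toFinset : Set ℝ) := by
      intro x hx
      have := hcon x hx
      have : P.derivative.eval x = 0 := by simpa using this
      simp only [Finset.mem_coe, Multiset.mem_toFinset, mem_roots hP]
      exact this
    exact (Set.Icc_infinite huv) (P.derivative.roots.toFinset.finite_toSet.subset hsub)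
  have hFa : F a = 0 := by simp [hF]
  have hge : ∀ u v, u ≤ v → |P.eval v - P.eval u| ≤ F v - F u := by
    intro u v huv
    rw [hFsub, ← hFTC]
    exact intervalIntegral.abs_integral_le_integral_abs huv
  have hdeg : 0 < (P - C (P.eval a)).degree := by
    rw [← natDegree_pos_iff_degree_pos, natDegree_sub_C]
    rw [Ne, derivative_eq_zero] at hP
    omega
  have hsurj : Function.Surjective F := by
    have hFc : Continuous F := by
      rw [continuous_iff_continuousAt]; exact fun x => (hder x).continuousAt
    apply hFc.surjective
    · have := (P - C (P.eval a)).tendsto_norm_atTop hdeg (l := atTop) (z := fun x : ℝ => x)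
        tendsto_norm_atTop_atTop
      apply tendsto_atTop_mono' _ _ this
      filter_upwards [eventually_ge_atTop a] with x hx
      have := hge a x hx
      simpa [hFa] using this
    · have := (P - C (P.eval a)).tendsto_norm_atTop hdeg (l := atBot) (z := fun x : ℝ => x)
        tendsto_abs_atBot_atTop
      have := tendsto_neg_atTop_atBot.comp this
      apply tendsto_atBot_mono' _ _ this
      filter_upwards [eventually_le_atBot a] with x hx
      have := hge x a hx
      rw [abs_sub_comm] at this
      simp [hFa] at this ⊢
      linarith
  refine ⟨hmono.orderIsoOfSurjective F hsurj, hder, hFa, ?_⟩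
  intro i j hij
  change F (t j) - F (t i) = _
  have hlt : t i < t j := ht (by rw [Fin.lt_def]; omega)
  set z := (t i + t j) / 2 with hz
  have hzi : t i < z := by rw [hz]; linarith
  have hzj : z < t j := by rw [hz]; linarith
  have hne : ∀ x, t i < x → x < t j → P.derivative.eval x ≠ 0 := by
    intro x h1 h2 h0
    obtain ⟨k, rfl⟩ := (htc x).1 h0
    rcases aux_pos_s5 p t t ht ht i j hij _ _ h1 h2 h1 h2 k with h | h
    · exact lt_irrefl _ h.1
    · exact lt_irrefl _ h.1
  have hsg : ∀ x, t i < x → x < t j → 0 < P.derivative.eval z * P.derivative.eval x := by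
    intro x h1 h2
    exact aux_sign P.derivative P.derivative hP hP p t t ht ht htc htc (fun _ => rfl) z z z x
      (aux_pos_s5 p t t ht ht i j hij _ _ hzi hzj hzi hzj)
      (aux_pos_s5 p t t ht ht i j hij _ _ hzi hzj h1 h2)
      (mul_self_pos.2 (hne z hzi hzj))
  apply le_antisymm _ (hge _ _ hlt.le)
  rw [hFsub, ← hFTC]
  have hends : ∀ x ∈ Set.uIcc (t i) (t j), |P.derivative.eval x| =
      SignType.sign (P.derivative.eval z) * P.derivative.eval x := by
    intro x hx
    rw [Set.uIcc_of_le hlt.le] at hx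
    rcases hx.1.eq_or_lt with h | h
    · have : P.derivative.eval x = 0 := (htc x).2 ⟨i, h.symm⟩
      simp [this]
    rcases hx.2.eq_or_lt with h' | h'
    · have : P.derivative.eval x = 0 := (htc x).2 ⟨j, h'⟩
      simp [this]
    have := hsg x h h'
    rcases mul_pos_iff.1 this with h | h
    · simp [sign_pos h.1, abs_of_pos h.2]
    · simp [sign_neg h.1, abs_of_neg h.2]
  rw [intervalIntegral.integral_congr hends, intervalIntegral.integral_const_mul]
  refine (le_abs_self _).trans ?_
  rw [abs_mul]
  have : |((SignType.sign (P.derivative.eval z) : SignType) : ℝ)| ≤ 1 := by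
    rcases lt_trichotomy (P.derivative.eval z) 0 with h | h | h <;> simp [h]
  exact mul_le_of_le_one_left (abs_nonneg _) this

open Polynomial in
lemma aux_core (P Q : ℝ[X]) (m : ℕ) (hP : P.natDegree = m + 1) (hQ : Q.natDegree = m + 1)
    (p : ℕ) (hp2 : 2 ≤ p) (t s : Fin p → ℝ) (ht : StrictMono t) (hs : StrictMono s)
    (htc : ∀ x : ℝ, P.derivative.eval x = 0 ↔ ∃ i, x = t i)
    (hsc : ∀ x : ℝ, Q.derivative.eval x = 0 ↔ ∃ i, x = s i)
    (hv : ∀ i, Q.eval (s i) = P.eval (t i))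
    (hm : ∀ i, multAt (fun x => Q.eval x) (s i) = multAt (fun x => P.eval x) (t i)) :
    ∃ φ : ℝ ≃o ℝ, (∃ K : NNReal, LipschitzWith K φ) ∧ (∃ K : NNReal, LipschitzWith K φ.symm) ∧
      ∀ x, Q.eval (φ x) = P.eval x := by
  have hP1 : P.derivative ≠ 0 := by rw [Ne, derivative_eq_zero]; omega
  have hQ1 : Q.derivative ≠ 0 := by rw [Ne, derivative_eq_zero]; omega
  have hmul : ∀ i, Q.derivative.rootMultiplicity (s i) = P.derivative.rootMultiplicity (t i) := by
    intro i
    have := hm i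
    rw [aux_multAt P hP1, aux_multAt Q hQ1] at this
    omega
  set i0 : Fin p := ⟨0, by omega⟩ with hi0
  set i1 : Fin p := ⟨1, by omega⟩ with hi1
  obtain ⟨F, hF, hF0, hFi⟩ := aux_F P hP1 p t ht htc (t i0)
  obtain ⟨G, hG, hG0, hGi⟩ := aux_F Q hQ1 p s hs hsc (s i0)
  have hFG : ∀ n : ℕ, ∀ hn : n < p, F (t ⟨n, hn⟩) = G (s ⟨n, hn⟩) := by
    intro n
    induction n with
    | zero => intro hn; exact hF0.trans hG0.symm
    | succ n ih =>
      intro hn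
      have h1 := hFi ⟨n, by omega⟩ ⟨n+1, hn⟩ rfl
      have h2 := hGi ⟨n, by omega⟩ ⟨n+1, hn⟩ rfl
      rw [hv, hv] at h2
      have := ih (by omega)
      linarith
  set φ : ℝ ≃o ℝ := F.trans G.symm with hφ
  have hGφ : ∀ x, G (φ x) = F x := by intro x; simp [hφ]
  have hφt : ∀ i, φ (t i) = s i := by
    intro i
    apply G.injective
    rw [hGφ]
    exact hFG i i.2
  have hpos : ∀ x, P.derivative.eval x ≠ 0 →
      ∀ i, (x < t i ∧ φ x < s i) ∨ (t i < x ∧ s i < φ x) := by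
    intro x hx i
    rw [← hφt i, φ.lt_iff_lt, φ.lt_iff_lt, and_self, and_self]
    apply lt_or_gt_of_ne
    intro h
    exact hx ((htc x).2 ⟨i, h⟩)
  have hne : ∀ x, P.derivative.eval x ≠ 0 → Q.derivative.eval (φ x) ≠ 0 := by
    intro x hx h0
    obtain ⟨i, hi⟩ := (hsc _).1 h0
    rw [← hφt i] at hi
    exact hx ((htc x).2 ⟨i, φ.injective hi⟩)
  have hsgn : ∀ x, P.derivative.eval x ≠ 0 →
      0 < P.derivative.eval x * Q.derivative.eval (φ x) := by
    have h01 : i0 < i1 := by rw [Fin.lt_def]; simp [hi0, hi1]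
    obtain ⟨ξ, hξ, eξ⟩ := exists_hasDerivAt_eq_slope (fun x => P.eval x)
      (fun x => P.derivative.eval x) (ht h01) (by fun_prop) (fun x _ => P.hasDerivAt x)
    obtain ⟨η, hη, eη⟩ := exists_hasDerivAt_eq_slope (fun x => Q.eval x)
      (fun x => Q.derivative.eval x) (hs h01) (by fun_prop) (fun x _ => Q.hasDerivAt x)
    have hpp := aux_pos_s5 p t s ht hs i0 i1 (by simp [hi0, hi1]) ξ η hξ.1 hξ.2 hη.1 hη.2
    have hξ0 : P.derivative.eval ξ ≠ 0 := by
      intro h0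
      obtain ⟨k, rfl⟩ := (htc _).1 h0
      rcases hpp k with h | h
      · exact lt_irrefl _ h.1
      · exact lt_irrefl _ h.1
    have h1 : 0 < t i1 - t i0 := sub_pos.2 (ht h01)
    have h2 : 0 < s i1 - s i0 := sub_pos.2 (hs h01)
    have hb : 0 < P.derivative.eval ξ * Q.derivative.eval η := by
      have hz : P.eval (t i1) - P.eval (t i0) ≠ 0 := by
        intro h; rw [h] at eξ; simp at eξ; exact hξ0 eξ
      rw [eξ, eη, hv, hv, div_mul_div_comm]
      have := mul_self_pos.2 hz
      positivity
    intro x hx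
    exact aux_sign P.derivative Q.derivative hP1 hQ1 p t s ht hs htc hsc hmul ξ η x (φ x)
      hpp (hpos x hx) hb
  have hφc := φ.continuous
  have hder : ∀ x, P.derivative.eval x ≠ 0 →
      HasDerivAt (fun x => Q.eval (φ x) - P.eval x) 0 x := by
    intro x hx
    have h1 := aux_deriv φ F G hφc φ.injective hGφ x _ _ (hF x) (hG (φ x))
      (abs_ne_zero.2 (hne x hx))
    have h2 := ((Q.hasDerivAt (φ x)).comp x h1).fun_sub (P.hasDerivAt x)
    suffices h3 : Q.derivative.eval (φ x) * (|P.derivative.eval x| / |Q.derivative.eval (φ x)|)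
        - P.derivative.eval x = 0 by
      rw [h3] at h2
      exact h2
    rcases mul_pos_iff.1 (hsgn x hx) with h | h
    · rw [abs_of_pos h.1, abs_of_pos h.2]
      field_simp [h.2.ne']
      ring
    · rw [abs_of_neg h.1, abs_of_neg h.2]
      field_simp [h.2.ne]
      ring
  have hroot : ∀ x, x ∉ P.derivative.roots.toFinset → P.derivative.eval x ≠ 0 := by
    intro x hx
    simpa [hP1, -derivative_eq_zero] using hx
  have hmo := aux_mono' (fun x => Q.eval (φ x) - P.eval x) (by fun_prop)
    P.derivative.roots.toFinset (fun x hx => ⟨0, le_rfl, hder x (hroot x hx)⟩)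
  have han := aux_mono' (fun x => -(Q.eval (φ x) - P.eval x)) (by fun_prop)
    P.derivative.roots.toFinset (fun x hx => ⟨-0, by simp, (hder x (hroot x hx)).fun_neg⟩)
  have hQP : ∀ x, Q.eval (φ x) = P.eval x := by
    intro x
    have h0 : Q.eval (φ (t i0)) - P.eval (t i0) = 0 := by rw [hφt, hv, sub_self]
    rcases le_total x (t i0) with h | h
    · have h1 := hmo h
      have h2 := han h
      simp only at h1 h2
      linarith
    · have h1 := hmo h
      have h2 := han h
      simp only at h1 h2
      linarith
  have hmm : ∀ x, Q.derivative.rootMultiplicity (φ x) = P.derivative.rootMultiplicity x := by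
    intro x
    by_cases hx : P.derivative.eval x = 0
    · obtain ⟨i, rfl⟩ := (htc x).1 hx
      rw [hφt, hmul]
    · rw [rootMultiplicity_eq_zero hx, rootMultiplicity_eq_zero (hne x hx)]
  refine ⟨φ, aux_lip_s5 P Q m hP hQ φ hQP hmm, aux_lip_s5 Q P m hQ hP φ.symm ?_ ?_, hQP⟩
  · intro x; rw [← hQP, φ.apply_symm_apply]
  · intro x; rw [← hmm, φ.apply_symm_apply]

lemma aux_equiv (f g : ℝ → ℝ) (e : ℝ ≃ ℝ) (h1 : ∃ K : NNReal, LipschitzWith K e)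
    (h2 : ∃ K : NNReal, LipschitzWith K e.symm) (c : ℝ) (hc : 0 < c)
    (h : ∀ x, g (e x) = c * f x) : LipschitzEquivFun f g := by
  refine ⟨e, e.bijective, h1, ?_, c, hc, h⟩
  rwa [Function.invFun_eq_of_injective_of_rightInverse e.injective e.apply_symm_apply]

open Polynomial in
lemma aux_bwd (P Q : ℝ[X]) (m : ℕ) (hP : P.natDegree = m + 1) (hQ : Q.natDegree = m + 1)
    (p : ℕ) (hp2 : 2 ≤ p) (t s : Fin p → ℝ) (ht : StrictMono t) (hs : StrictMono s)
    (htc : ∀ x : ℝ, P.derivative.eval x = 0 ↔ ∃ i, x = t i)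
    (hsc : ∀ x : ℝ, Q.derivative.eval x = 0 ↔ ∃ i, x = s i) (c : ℝ) (hc : 0 < c)
    (hv : ∀ i, Q.eval (s i) = c * P.eval (t i) ∧
      multAt (fun x => Q.eval x) (s i) = multAt (fun x => P.eval x) (t i)) :
    ∃ φ : ℝ ≃o ℝ, (∃ K : NNReal, LipschitzWith K φ) ∧ (∃ K : NNReal, LipschitzWith K φ.symm) ∧
      ∀ x, Q.eval (φ x) = c * P.eval x := by
  obtain ⟨φ, h1, h2, h3⟩ := aux_core (C c * P) Q m (by rw [natDegree_C_mul hc.ne', hP]) hQ p hp2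
    t s ht hs (by intro x; rw [← htc]; simp [hc.ne']) hsc (by intro i; simp [(hv i).1])
    (by
      intro i
      rw [(hv i).2]
      unfold multAt
      simp only [eval_mul, eval_C, iteratedDeriv_const_mul_field, ne_eq, mul_eq_zero, hc.ne',
        false_or])
  exact ⟨φ, h1, h2, by simpa using h3⟩

open Polynomial in
lemma aux_bwd_rev (P Q : ℝ[X]) (m : ℕ) (hP : P.natDegree = m + 1) (hQ : Q.natDegree = m + 1)
    (p : ℕ) (hp2 : 2 ≤ p) (t s : Fin p → ℝ) (ht : StrictMono t) (hs : StrictMono s)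
    (htc : ∀ x : ℝ, P.derivative.eval x = 0 ↔ ∃ i, x = t i)
    (hsc : ∀ x : ℝ, Q.derivative.eval x = 0 ↔ ∃ i, x = s i) (c : ℝ) (hc : 0 < c)
    (hv : ∀ i, Q.eval (s i) = c * P.eval (t (Fin.rev i)) ∧
      multAt (fun x => Q.eval x) (s i) = multAt (fun x => P.eval x) (t (Fin.rev i))) :
    LipschitzEquivFun (fun x => P.eval x) (fun x => Q.eval x) := by
  obtain ⟨φ, ⟨K1, h1⟩, ⟨K2, h2⟩, h3⟩ := aux_bwd (P.comp (-X)) Q m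
    (by rw [natDegree_comp, hP]; simp) hQ p hp2
    (fun i => - t (Fin.rev i)) s
    (by
      intro i j hij
      exact neg_lt_neg (ht (Fin.rev_lt_rev.2 hij))) hs
    (by
      intro x
      have : eval x (derivative (P.comp (-X))) = - P.derivative.eval (-x) := by
        simp [derivative_comp]
      rw [this, neg_eq_zero, htc]
      constructor
      · rintro ⟨i, hi⟩
        exact ⟨Fin.rev i, by simp [← hi]⟩
      · rintro ⟨i, hi⟩
        exact ⟨Fin.rev i, by simp [hi]⟩) hsc c hc
    (by
      intro i
      refine ⟨by simp [(hv i).1], ?_⟩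
      rw [(hv i).2]
      unfold multAt
      have : (fun x => (P.comp (-X)).eval x) = fun x => (fun y => P.eval y) (-x) := by
        funext x; simp
      rw [this]
      have hk : ∀ k a, iteratedDeriv k (fun x => (fun y => P.eval y) (-x)) (-a) =
          (-1) ^ k * iteratedDeriv k (fun y => P.eval y) a := by
        intro k a
        rw [iteratedDeriv_comp_neg k (fun y => P.eval y) (-a), neg_neg, smul_eq_mul]
      simp_rw [hk]
      simp)
  refine aux_equiv _ _ ((Equiv.neg ℝ).trans φ.toEquiv) ⟨K1, ?_⟩ ⟨K2, ?_⟩ c hc ?_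
  · apply LipschitzWith.of_dist_le_mul
    intro x y
    simpa using h1.dist_le_mul (-x) (-y)
  · apply LipschitzWith.of_dist_le_mul
    intro x y
    simpa using h2.dist_le_mul x y
  · intro x
    simpa using h3 (-x)

/-- Two polynomial functions of the same degree `d ≥ 1`, each with exactly `p ≥ 2`
critical points (enumerated in increasing order by `t` and `s`), are Lipschitz
equivalent iff their multiplicity symbols are similar (directly or reversely). -/
theorem stmt_5 (P Q : Polynomial ℝ) (d : ℕ) (hd : 1 ≤ d)
    (hP : P.natDegree = d) (hQ : Q.natDegree = d)
    (p : ℕ) (hp2 : 2 ≤ p)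
    (t s : Fin p → ℝ) (ht : StrictMono t) (hs : StrictMono s)
    (htc : ∀ x : ℝ, P.derivative.eval x = 0 ↔ ∃ i, x = t i)
    (hsc : ∀ x : ℝ, Q.derivative.eval x = 0 ↔ ∃ i, x = s i) :
    LipschitzEquivFun (fun x => P.eval x) (fun x => Q.eval x) ↔
      ((∃ c : ℝ, 0 < c ∧ ∀ i : Fin p, Q.eval (s i) = c * P.eval (t i) ∧
          multAt (fun x => Q.eval x) (s i) = multAt (fun x => P.eval x) (t i)) ∨
       (∃ c : ℝ, 0 < c ∧ ∀ i : Fin p, Q.eval (s i) = c * P.eval (t i.rev) ∧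
          multAt (fun x => Q.eval x) (s i) = multAt (fun x => P.eval x) (t i.rev))) := by

  obtain ⟨m, rfl⟩ : ∃ m, d = m + 1 := ⟨d - 1, by omega⟩
  have hP1 : P.derivative ≠ 0 := by rw [Ne, Polynomial.derivative_eq_zero]; omega
  have hQ1 : Q.derivative ≠ 0 := by rw [Ne, Polynomial.derivative_eq_zero]; omega
  constructor
  · rintro ⟨φ, hbij, ⟨K, hK⟩, ⟨K', hK'⟩, c, hc, h⟩
    simp only at h
    have hli : ∀ x, Function.invFun φ (φ x) = x := Function.leftInverse_invFun hbij.1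
    have hri : ∀ x, φ (Function.invFun φ x) = x := Function.rightInverse_invFun hbij.2
    have hmul : ∀ x, Q.derivative.rootMultiplicity (φ x) = P.derivative.rootMultiplicity x := by
      intro x
      apply le_antisymm (aux_fwd P Q hP1 hQ1 φ K hK c hc h x)
      have := aux_fwd Q P hQ1 hP1 (Function.invFun φ) K' hK' c⁻¹ (inv_pos.2 hc) (fun y => by
        have := h (Function.invFun φ y)
        rw [hri] at this
        rw [this]
        field_simp) (φ x)
      rwa [hli] at this
    have hmult : ∀ x, multAt (fun x => Q.eval x) (φ x) = multAt (fun x => P.eval x) x := by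
      intro x
      rw [aux_multAt P hP1, aux_multAt Q hQ1, hmul]
    have hcrit : ∀ x, Q.derivative.eval (φ x) = 0 ↔ P.derivative.eval x = 0 := by
      intro x
      have h1 := Polynomial.rootMultiplicity_pos hQ1 (x := φ x)
      have h2 := Polynomial.rootMultiplicity_pos hP1 (x := x)
      rw [hmul] at h1
      exact h1.symm.trans h2
    have hrange : ∀ y, (∃ i, y = s i) ↔ ∃ i, y = φ (t i) := by
      intro y
      rw [← hsc, ← hri y, hcrit, htc]
      simp only [hbij.1.eq_iff]
    rcases hK.continuous.strictMono_of_inj hbij.1 with hmo | han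
    · left
      have he : φ ∘ t = s := by
        rw [← (hmo.comp ht).range_inj hs]
        ext y
        simpa [eq_comm] using (hrange y).symm
      refine ⟨c, hc, fun i => ?_⟩
      rw [← he]
      exact ⟨h _, hmult _⟩
    · right
      have hmo2 : StrictMono (fun i : Fin p => φ (t i.rev)) := by
        intro i j hij
        exact han (ht (Fin.rev_lt_rev.2 hij))
      have he : (fun i : Fin p => φ (t i.rev)) = s := by
        rw [← hmo2.range_inj hs]
        ext y
        have := hrange y
        simp only [Set.mem_range]
        constructor
        · rintro ⟨i, hi⟩
          obtain ⟨j, hj⟩ := this.2 ⟨_, hi.symm⟩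
          exact ⟨j, hj.symm⟩
        · rintro ⟨i, hi⟩
          obtain ⟨j, hj⟩ := this.1 ⟨_, hi.symm⟩
          exact ⟨j.rev, by simp [hj]⟩
      refine ⟨c, hc, fun i => ?_⟩
      rw [← he]
      exact ⟨h _, hmult _⟩
  · rintro (⟨c, hc, h⟩ | ⟨c, hc, h⟩)
    · obtain ⟨φ, h1, h2, h3⟩ := aux_bwd P Q m hP hQ p hp2 t s ht hs htc hsc c hc h
      exact aux_equiv _ _ φ.toEquiv h1 h2 c hc h3
    · exact aux_bwd_rev P Q m hP hQ p hp2 t s ht hs htc hsc c hc h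
end

section
/- Let (G, ·) be a group and let α : G → Aut(G) be a group homomorphism satisfying: (i) α ∘ φ = α for every φ in the image of α (that is, α(φ(g)) = α(g) for all g ∈ G and all φ ∈ Im α), and (ii) the image of α is an abelian subgroup of Aut(G). Define a new binary operation on G by g ∘ h := (α(h)(g)) · h. Then (G, ∘) is a group: ∘ is associative, the identity element 1 of (G, ·) is a two-sided identity for ∘, and every g ∈ G has a two-sided ∘-inverse, namely α(g⁻¹)(g⁻¹). -/
/-- Given a group `(G, ·)` and a homomorphism `α : G → Aut(G)` with `α ∘ φ = α` for all
`φ ∈ Im α` and with `Im α` abelian, the operation `g ∘ h := (α h) g · h` makes `G` a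
group: it is associative, `1` is a two-sided identity, and `α (g⁻¹) (g⁻¹)` is a two-sided
inverse of `g`. -/
theorem stmt_6 {G : Type*} [Group G] (α : G →* MulAut G)
    (h1 : ∀ g h : G, α ((α h) g) = α g)
    (h2 : ∀ g h : G, α g * α h = α h * α g) :
    let op : G → G → G := fun g h => (α h) g * h
    (∀ g₁ g₂ g₃ : G, op (op g₁ g₂) g₃ = op g₁ (op g₂ g₃)) ∧
    (∀ g : G, op 1 g = g ∧ op g 1 = g) ∧
    (∀ g : G, op ((α g⁻¹) g⁻¹) g = 1 ∧ op g ((α g⁻¹) g⁻¹) = 1) := by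
  intro op
  refine ⟨fun a b c => ?_, fun g => ⟨?_, ?_⟩, fun g => ⟨?_, ?_⟩⟩
  · change (α c) ((α b) a * b) * c = (α ((α c) b * c)) a * ((α c) b * c)
    rw [map_mul α, h1, h2, MulAut.mul_apply, map_mul, mul_assoc]
  · change (α g) 1 * g = g
    rw [map_one, one_mul]
  · change (α 1) g * 1 = g
    rw [map_one, MulAut.one_apply, mul_one]
  · change (α g) ((α g⁻¹) g⁻¹) * g = 1
    rw [← MulAut.mul_apply, ← map_mul, mul_inv_cancel, map_one, MulAut.one_apply, inv_mul_cancel]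
  · change (α ((α g⁻¹) g⁻¹)) g * (α g⁻¹) g⁻¹ = 1
    rw [h1, ← map_mul, mul_inv_cancel, map_one]
end

section
/- Let (G, ·) be a group and α : G → Aut(G) a group homomorphism with α ∘ φ = α for all φ ∈ Im α and with Im α abelian, and let (G, ∘) be the group with operation g ∘ h := (α(h)(g)) · h. Let X be a set, let • : X × G → X be a right action of (G, ·) (so x • 1 = x and (x • g) • h = x • (g·h)), and let A be a group homomorphism from (G, ∘) to the group of bijections of X such that: (I) A(h)(x • g) = (A(h)(x)) • α(h)(g) for all x ∈ X and g, h ∈ G, and (II) the image of A is an abelian subgroup of the group of bijections of X. Then the map defined by x ∘ g := (A(g)(x)) • g is a right action of (G, ∘) on X: x ∘ 1 = x and (x ∘ g) ∘ h = x ∘ (g ∘ h) for all x ∈ X and g, h ∈ G. -/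
/-- Given a group `(G, ·)`, a homomorphism `α : G → Aut(G)` with `α ∘ φ = α` for all
`φ ∈ Im α` and `Im α` abelian, and the modified group `(G, ∘)` with
`g ∘ h := (α h) g · h`; given a right action `act` of `(G, ·)` on a set `X` and a group
homomorphism `A` from `(G, ∘)` to the bijections of `X` satisfying
(I) `A h (x • g) = (A h x) • (α h) g` and (II) `Im A` abelian, the map
`x ∘ g := (A g x) • g` is a right action of `(G, ∘)` on `X`. -/
theorem stmt_7 {G : Type*} [Group G] {X : Type*} (α : G →* MulAut G)
    (h1 : ∀ g h : G, α ((α h) g) = α g)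
    (h2 : ∀ g h : G, α g * α h = α h * α g)
    (act : X → G → X)
    (hact1 : ∀ x : X, act x 1 = x)
    (hact2 : ∀ (x : X) (g h : G), act (act x g) h = act x (g * h))
    (A : G → Equiv.Perm X)
    (hA1 : A 1 = 1)
    (hAhom : ∀ g h : G, A ((α h) g * h) = A g * A h)
    (hI : ∀ (x : X) (g h : G), (A h) (act x g) = act ((A h) x) ((α h) g))
    (hII : ∀ g h : G, A g * A h = A h * A g) :
    let op : G → G → G := fun g h => (α h) g * h
    let act' : X → G → X := fun x g => act ((A g) x) g
    (∀ x : X, act' x 1 = x) ∧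
    (∀ (x : X) (g h : G), act' (act' x g) h = act' x (op g h)) := by
  intro op act'
  refine ⟨fun x => ?_, fun x g h => ?_⟩
  · simp only [act', hA1, hact1, Equiv.Perm.one_apply]
  · simp only [act', op]
    rw [hI, hact2, hAhom, hII, Equiv.Perm.mul_apply]
end

section
/- Let φ : ℝ → ℝ be a bi-Lipschitz homeomorphism such that g ∘ φ = f for some nonconstant real polynomial functions f, g : ℝ → ℝ, let λ be a nonzero real number, and let β be a rational number with β > 1. Define Φ on the open right half-plane H = {(x, y) ∈ ℝ² : x > 0} by Φ(x, y) := (λ·x, |λ|^β · x^β · φ(y·x^{−β})) (equivalently, Φ(x, t·x^β) = (λ·x, |λ|^β·φ(t)·x^β) for all x > 0 and t ∈ ℝ). Then for every δ > 0, Φ is Lipschitz on the strip {(x, y) ∈ ℝ² : 0 < x < δ}. -/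
open Filter Topology

open Asymptotics Polynomial in
theorem aux_theta (p : ℝ[X]) (hp : p ≠ 0) :
    (fun t => p.eval t) =Θ[Bornology.cobounded ℝ] (fun t => t ^ p.natDegree) := by
  have h : p.degree = (X ^ p.natDegree : ℝ[X]).degree := by
    rw [degree_X_pow, degree_eq_natDegree hp]
  have e : (fun t : ℝ => t ^ p.natDegree) = (X ^ p.natDegree : ℝ[X]).eval := by
    ext t; simp
  rw [e]
  exact ⟨isBigO_cobounded_of_degree_le h.le, isBigO_cobounded_of_degree_le h.ge⟩

open Asymptotics Polynomial in
theorem aux_bigO_s9 (p : ℝ[X]) (n : ℕ) (hp : p.natDegree ≤ n) :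
    (fun t => p.eval t) =O[Bornology.cobounded ℝ] (fun t => t ^ n) := by
  have h : p.degree ≤ (X ^ n : ℝ[X]).degree := by
    rw [degree_X_pow]; exact degree_le_of_natDegree_le hp
  have e : (fun t : ℝ => t ^ n) = (X ^ n : ℝ[X]).eval := by
    ext t; simp
  rw [e]
  exact isBigO_cobounded_of_degree_le h

open Asymptotics Polynomial in
theorem aux_deg (m n : ℕ)
    (h : (fun t : ℝ => t ^ m) =O[Bornology.cobounded ℝ] (fun t => t ^ n)) : m ≤ n := by
  by_contra hlt
  push Not at hlt
  have h1 : (fun t : ℝ => t ^ m) =O[atTop] (fun t => t ^ n) := by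
    refine h.mono ?_
    rw [Real.cobounded_eq]; exact le_sup_right
  have h2 : (fun t : ℝ => t ^ n) =o[atTop] (fun t => t ^ m) := isLittleO_pow_pow_atTop_of_lt hlt
  have h3 := h1.trans_isLittleO h2
  have h4 := isLittleO_irrefl' (l := atTop) (f' := fun t : ℝ => t ^ m) ?_
  · exact h4 h3
  · apply Eventually.frequently
    filter_upwards [eventually_gt_atTop 0] with t ht
    simpa using fun h => absurd h ht.ne'

theorem aux_euler (p : Polynomial ℝ) :
    (Polynomial.X * Polynomial.derivative p - Polynomial.C (p.natDegree : ℝ) * p).natDegree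
      ≤ p.natDegree - 1 := by
  rw [Polynomial.natDegree_le_iff_coeff_eq_zero]
  intro N hN
  rw [Polynomial.coeff_sub, Polynomial.coeff_C_mul]
  obtain ⟨k, rfl⟩ : ∃ k, N = k + 1 := ⟨N - 1, by omega⟩
  rw [Polynomial.coeff_X_mul, Polynomial.coeff_derivative]
  rcases Nat.lt_or_ge p.natDegree (k + 1) with h | h
  · rw [Polynomial.coeff_eq_zero_of_natDegree_lt h]; ring
  · have : p.natDegree = k + 1 := by omega
    rw [this]; push_cast; ring

open Asymptotics in
theorem aux_far (φ : ℝ → ℝ) (K K' : NNReal) (hK : LipschitzWith K φ)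
    (hK' : AntilipschitzWith K' φ)
    (p q : Polynomial ℝ) (hp : 1 ≤ p.natDegree) (hq : 1 ≤ q.natDegree)
    (hpq : ∀ t : ℝ, q.eval (φ t) = p.eval t) :
    ∃ C : ℝ, ∃ R : ℝ, 0 < R ∧ 0 ≤ C ∧ ∀ t, R < |t| → ∃ d, HasDerivAt φ d t ∧ |φ t - t * d| ≤ C := by
  have hp0 : p ≠ 0 := by rintro rfl; simp at hp
  have hq0 : q ≠ 0 := by rintro rfl; simp at hq
  have htend : Tendsto φ (Bornology.cobounded ℝ) (Bornology.cobounded ℝ) := hK'.tendsto_cobounded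
  have h1far : ∀ A : ℝ, ∀ᶠ t in Bornology.cobounded ℝ, A ≤ |t| := fun A =>
    (tendsto_norm_cobounded_atTop (E := ℝ)).eventually (eventually_ge_atTop A)
  have hO1 : φ =O[Bornology.cobounded ℝ] (fun t => t) := by
    refine IsBigO.of_bound (K + |φ 0|) ?_
    filter_upwards [h1far 1] with t ht
    have := hK.dist_le_mul t 0
    rw [Real.dist_eq, Real.dist_eq, sub_zero] at this
    rw [Real.norm_eq_abs, Real.norm_eq_abs]
    have h2 := abs_sub_abs_le_abs_sub (φ t) (φ 0)
    nlinarith [abs_nonneg (φ 0)]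
  have hO2 : (fun t => t) =O[Bornology.cobounded ℝ] φ := by
    refine IsBigO.of_bound (K' * (1 + |φ 0|)) ?_
    filter_upwards [htend.eventually (h1far 1)] with t ht
    have := hK'.le_mul_dist t 0
    rw [Real.dist_eq, Real.dist_eq, sub_zero] at this
    rw [Real.norm_eq_abs, Real.norm_eq_abs]
    have h2 := abs_sub (φ t) (φ 0)
    have h3 : |φ t - φ 0| ≤ (1 + |φ 0|) * |φ t| := by nlinarith [abs_nonneg (φ 0)]
    calc |t| ≤ K' * |φ t - φ 0| := this
      _ ≤ K' * ((1 + |φ 0|) * |φ t|) := by gcongr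
      _ = _ := by ring
  have hΘ : φ =Θ[Bornology.cobounded ℝ] (fun t => t) := ⟨hO1, hO2⟩
  have hΘn : ∀ n : ℕ, (fun t => φ t ^ n) =Θ[Bornology.cobounded ℝ] (fun t => t ^ n) :=
    fun n => hΘ.pow n
  have hpolyΘ : ∀ r : Polynomial ℝ, r ≠ 0 →
      (fun t => r.eval (φ t)) =Θ[Bornology.cobounded ℝ] (fun t => t ^ r.natDegree) := by
    intro r hr
    have a := aux_theta r hr
    exact IsTheta.trans ⟨a.1.comp_tendsto htend, a.2.comp_tendsto htend⟩ (hΘn _)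
  have hpolyO : ∀ (r : Polynomial ℝ) (n : ℕ), r.natDegree ≤ n →
      (fun t => r.eval (φ t)) =O[Bornology.cobounded ℝ] (fun t => t ^ n) := by
    intro r n hr
    exact ((aux_bigO_s9 r n hr).comp_tendsto htend).trans (hΘn _).1
  have hdeg : p.natDegree = q.natDegree := by
    have a := hpolyΘ q hq0
    simp only [hpq] at a
    have b := (aux_theta p hp0).symm.trans a
    exact le_antisymm (aux_deg _ _ b.1) (aux_deg _ _ b.2)
  have hq'deg : q.derivative.natDegree = q.natDegree - 1 := Polynomial.natDegree_derivative q
  have hq'0 : q.derivative ≠ 0 := by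
    intro h
    have := Polynomial.natDegree_eq_zero_of_derivative_eq_zero h
    omega
  have hden := hpolyΘ _ hq'0
  rw [hq'deg] at hden
  have hnum : (fun t => φ t * q.derivative.eval (φ t) - t * p.derivative.eval t)
      =O[Bornology.cobounded ℝ] (fun t => t ^ (q.natDegree - 1)) := by
    have a := hpolyO _ _ (aux_euler q)
    have b := aux_bigO_s9 _ _ (aux_euler p)
    rw [hdeg] at b
    refine (a.sub b).congr_left ?_
    intro t
    simp only [Polynomial.eval_sub, Polynomial.eval_mul, Polynomial.eval_X, Polynomial.eval_C, hpq]
    ring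
  obtain ⟨C, hC⟩ := (hnum.trans hden.2).bound
  have hne : ∀ᶠ t in Bornology.cobounded ℝ, q.derivative.eval (φ t) ≠ 0 := by
    filter_upwards [hden.2.eq_zero_imp, h1far 1] with t ht h1 h0
    have : t ≠ 0 := by intro h; rw [h] at h1; norm_num at h1
    exact pow_ne_zero _ this (ht h0)
  have hfin : ∀ᶠ t in Bornology.cobounded ℝ,
      ∃ d, HasDerivAt φ d t ∧ |φ t - t * d| ≤ max C 0 := by
    filter_upwards [hC, hne] with t hCt hnet
    refine ⟨(q.derivative.eval (φ t))⁻¹ * p.derivative.eval t, ?_, ?_⟩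
    · have hs : HasStrictDerivAt (fun x => q.eval x) (q.derivative.eval (φ t)) (φ t) :=
        q.hasStrictDerivAt _
      have hinv := (hs.to_localInverse hnet).hasDerivAt
      have hpd : HasDerivAt (fun x => p.eval x) (p.derivative.eval t) t := p.hasDerivAt t
      simp only [hpq] at hinv
      have hc := HasDerivAt.comp t hinv hpd
      refine hc.congr_of_eventuallyEq ?_
      have := hK.continuous.continuousAt.eventually (hs.eventually_left_inverse hnet)
      filter_upwards [this] with s hs'
      simp only [Function.comp]
      rw [← hpq s, hs']
    · have e : φ t - t * ((q.derivative.eval (φ t))⁻¹ * p.derivative.eval t)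
          = (φ t * q.derivative.eval (φ t) - t * p.derivative.eval t) / q.derivative.eval (φ t) := by
        field_simp
      rw [e, abs_div, div_le_iff₀ (abs_pos.2 hnet)]
      rw [Real.norm_eq_abs, Real.norm_eq_abs] at hCt
      exact hCt.trans (by gcongr; exact le_max_left _ _)
  have hb := (Metric.hasBasis_cobounded_compl_closedBall (0 : ℝ)).eventually_iff.1 hfin
  obtain ⟨R, -, hR⟩ := hb
  refine ⟨max C 0, max R 1, by positivity, le_max_right _ _, fun t ht => hR ?_⟩
  simp only [Set.mem_compl_iff, Metric.mem_closedBall, dist_zero_right, Real.norm_eq_abs, not_le]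
  exact lt_of_le_of_lt (le_max_left _ _) ht

/-- the key inequality -/
theorem aux_key (φ : ℝ → ℝ) (K : NNReal) (hK : LipschitzWith K φ) (C R : ℝ) (hR : 0 < R)
    (hC : 0 ≤ C)
    (h : ∀ t, R < |t| → ∃ d, HasDerivAt φ d t ∧ |φ t - t * d| ≤ C) :
    ∃ D : ℝ, 0 ≤ D ∧ |φ 0| ≤ D ∧ ∀ t₁ t₂, 0 < t₁ * t₂ →
      |t₂ * φ t₁ - t₁ * φ t₂| ≤ D * |t₁ - t₂| := by
  have hlip : ∀ a b, |φ a - φ b| ≤ K * |a - b| := fun a b => by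
    have := hK.dist_le_mul a b
    rwa [Real.dist_eq, Real.dist_eq] at this
  have hnear : ∀ t₁ t₂, |t₂| ≤ R →
      |t₂ * φ t₁ - t₁ * φ t₂| ≤ (2 * (R * K) + |φ 0|) * |t₁ - t₂| := by
    intro t₁ t₂ ht
    have e : t₂ * φ t₁ - t₁ * φ t₂ = t₂ * (φ t₁ - φ t₂) - (t₁ - t₂) * φ t₂ := by ring
    have h1 := hlip t₁ t₂
    have h2 : |φ t₂| ≤ R * K + |φ 0| := by
      have := hlip t₂ 0
      rw [sub_zero] at this
      have h3 := abs_sub_abs_le_abs_sub (φ t₂) (φ 0)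
      have : (K : ℝ) * |t₂| ≤ K * R := by gcongr
      linarith
    rw [e]
    calc _ ≤ |t₂ * (φ t₁ - φ t₂)| + |(t₁ - t₂) * φ t₂| := abs_sub _ _
      _ = |t₂| * |φ t₁ - φ t₂| + |t₁ - t₂| * |φ t₂| := by rw [abs_mul, abs_mul]
      _ ≤ R * (K * |t₁ - t₂|) + |t₁ - t₂| * (R * K + |φ 0|) := by gcongr
      _ = _ := by ring
  -- far part, in the inverse variable
  have hfar : ∀ s : Set ℝ, Convex ℝ s → (∀ x ∈ s, x ≠ 0 ∧ R < |x⁻¹|) → ∀ a ∈ s, ∀ b ∈ s,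
      |b * φ b⁻¹ - a * φ a⁻¹| ≤ C * |b - a| := by
    intro s hs hsx a ha b hb
    have hd : ∀ x ∈ s, ∃ d, HasDerivAt (fun x => x * φ x⁻¹) d x ∧ ‖d‖ ≤ C := by
      intro x hx
      obtain ⟨hx0, hxR⟩ := hsx x hx
      obtain ⟨d, hd, hdC⟩ := h _ hxR
      have h1 := (hasDerivAt_id x).mul (HasDerivAt.comp x hd (hasDerivAt_inv hx0))
      refine ⟨_, h1, ?_⟩
      rw [Real.norm_eq_abs]
      convert hdC using 2
      simp
      field_simp
      ring
    choose! f' hf' hb' using hd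
    have := hs.norm_image_sub_le_of_norm_hasDerivWithin_le
      (fun x hx => (hf' x hx).hasDerivWithinAt) hb' ha hb
    simpa [Real.norm_eq_abs] using this
  have hconv : ∀ a b : ℝ, a ≠ 0 → b ≠ 0 → |b⁻¹ * φ b - a⁻¹ * φ a| ≤ C * |b⁻¹ - a⁻¹| →
      |b * φ a - a * φ b| ≤ C * |a - b| := by
    intro a b ha hb hab
    have e1 : b * φ a - a * φ b = -(a * b) * (b⁻¹ * φ b - a⁻¹ * φ a) := by field_simp; ring
    have e2 : a - b = (a * b) * (b⁻¹ - a⁻¹) := by field_simp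
    rw [e1, e2, abs_mul, abs_mul, abs_neg]
    calc _ ≤ |a * b| * (C * |b⁻¹ - a⁻¹|) := by gcongr
      _ = _ := by ring
  refine ⟨max (2 * (R * K) + |φ 0|) C, le_max_of_le_right hC, le_max_of_le_left ?_, ?_⟩
  · have : 0 ≤ R * K := by positivity
    linarith
  intro t₁ t₂ ht
  by_cases c2 : |t₂| ≤ R
  · exact (hnear _ _ c2).trans (by gcongr; exact le_max_left _ _)
  by_cases c1 : |t₁| ≤ R
  · have := hnear t₂ t₁ c1
    rw [abs_sub_comm, abs_sub_comm t₂ t₁] at this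
    exact this.trans (by gcongr; exact le_max_left _ _)
  push Not at c1 c2
  have ha : t₁ ≠ 0 := by rintro rfl; simp at ht
  have hb : t₂ ≠ 0 := by rintro rfl; simp at ht
  refine (hconv t₁ t₂ ha hb ?_).trans (by gcongr; exact le_max_right _ _)
  rcases (mul_pos_iff.1 ht) with ⟨p1, p2⟩ | ⟨p1, p2⟩
  · have := hfar (Set.Ioo 0 R⁻¹) (convex_Ioo _ _) ?_ t₁⁻¹ ?_ t₂⁻¹ ?_
    · simpa using this
    · rintro x ⟨x0, x1⟩
      refine ⟨x0.ne', ?_⟩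
      rw [abs_of_pos (inv_pos.2 x0)]
      exact (lt_inv_comm₀ x0 hR).1 x1
    · rw [abs_of_pos p1] at c1
      exact ⟨inv_pos.2 p1, inv_strictAnti₀ hR c1⟩
    · rw [abs_of_pos p2] at c2
      exact ⟨inv_pos.2 p2, inv_strictAnti₀ hR c2⟩
  · have := hfar (Set.Ioo (-R⁻¹) 0) (convex_Ioo _ _) ?_ t₁⁻¹ ?_ t₂⁻¹ ?_
    · simpa using this
    · rintro x ⟨x0, x1⟩
      refine ⟨x1.ne, ?_⟩
      rw [abs_inv, abs_of_neg x1]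
      exact (lt_inv_comm₀ (neg_pos.2 x1) hR).1 (by linarith)
    · rw [abs_of_neg p1] at c1
      have := inv_strictAnti₀ hR c1
      rw [inv_neg] at this
      exact ⟨by linarith, inv_lt_zero.2 p1⟩
    · rw [abs_of_neg p2] at c2
      have := inv_strictAnti₀ hR c2
      rw [inv_neg] at this
      exact ⟨by linarith, inv_lt_zero.2 p2⟩

theorem aux_rpow (b δ : ℝ) (hb : 1 < b) (x y : ℝ) (hx : 0 < x) (hxδ : x < δ) (hy : 0 < y)
    (hyδ : y < δ) : |y ^ b - x ^ b| ≤ b * δ ^ (b - 1) * |y - x| := by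
  have := (convex_Ioo (0 : ℝ) δ).norm_image_sub_le_of_norm_hasDerivWithin_le
    (f := fun x => x ^ b) (f' := fun x => b * x ^ (b - 1)) (C := b * δ ^ (b - 1))
    (fun z hz => (Real.hasDerivAt_rpow_const (Or.inl hz.1.ne')).hasDerivWithinAt) ?_
    ⟨hx, hxδ⟩ ⟨hy, hyδ⟩
  · simpa [Real.norm_eq_abs] using this
  · rintro z ⟨z0, z1⟩
    have : 0 < z ^ (b - 1) := Real.rpow_pos_of_pos z0 _
    rw [Real.norm_eq_abs, abs_of_nonneg (by positivity)]
    gcongr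

/-- Let `φ` be a bi-Lipschitz homeomorphism of `ℝ` with `g ∘ φ = f` for nonconstant
polynomial functions `f, g`, let `λ ≠ 0` and `β > 1` rational. The map
`Φ(x, t·x^β) = (λ·x, |λ|^β·φ(t)·x^β)` on the right half-plane is Lipschitz on each
strip `{0 < x < δ}`. -/
theorem stmt_9 (φ : ℝ → ℝ) (hφbij : Function.Bijective φ)
    (hφlip : ∃ K : NNReal, LipschitzWith K φ)
    (hφinv : ∃ K : NNReal, LipschitzWith K (Function.invFun φ))
    (p q : Polynomial ℝ) (hp : 1 ≤ p.natDegree) (hq : 1 ≤ q.natDegree)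
    (hpq : ∀ t : ℝ, q.eval (φ t) = p.eval t)
    (lam : ℝ) (hlam : lam ≠ 0) (β : ℚ) (hβ : 1 < β)
    (Φ : ℝ × ℝ → ℝ × ℝ)
    (hΦ : ∀ x t : ℝ, 0 < x →
      Φ (x, t * x ^ (β : ℝ)) = (lam * x, |lam| ^ (β : ℝ) * φ t * x ^ (β : ℝ)))
    (δ : ℝ) (hδ : 0 < δ) :
    ∃ K : NNReal, LipschitzOnWith K Φ {z : ℝ × ℝ | 0 < z.1 ∧ z.1 < δ} := by

  obtain ⟨K, hK⟩ := hφlip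
  obtain ⟨K', hK'⟩ := hφinv
  have hanti : AntilipschitzWith K' φ :=
    hK'.to_rightInverse (Function.leftInverse_invFun hφbij.1)
  obtain ⟨C, R, hR, hC, h⟩ := aux_far φ K K' hK hanti p q hp hq hpq
  obtain ⟨D, hD, hD0, hkey⟩ := aux_key φ K hK C R hR hC h
  have hb : (1 : ℝ) < (β : ℝ) := by exact_mod_cast hβ
  generalize (β : ℝ) = b at hΦ hb
  have hlip : ∀ a b, |φ a - φ b| ≤ K * |a - b| := fun a b => by
    have := hK.dist_le_mul a b
    rwa [Real.dist_eq, Real.dist_eq] at this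
  have hval : ∀ x y : ℝ, 0 < x →
      Φ (x, y) = (lam * x, |lam| ^ b * φ (y / x ^ b) * x ^ b) := by
    intro x y hx
    have hxb : x ^ b ≠ 0 := (Real.rpow_pos_of_pos hx _).ne'
    have := hΦ x (y / x ^ b) hx
    rwa [div_mul_cancel₀ _ hxb] at this
  -- Lipschitz in `u`
  have hu : ∀ u v y : ℝ, 0 < u → 0 < v → |u * φ (y / u) - v * φ (y / v)| ≤ D * |u - v| := by
    intro u v y hu hv
    by_cases hy : y = 0
    · subst hy
      rw [zero_div, zero_div, ← sub_mul, abs_mul, mul_comm]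
      gcongr
    · have k := hkey (y / u) (y / v) (by
        have : 0 < y * y := mul_self_pos.2 hy
        rw [div_mul_div_comm]; positivity)
      have e1 : u * φ (y / u) - v * φ (y / v)
          = (u * v / y) * (y / v * φ (y / u) - y / u * φ (y / v)) := by field_simp
      have e2 : u - v = -((u * v / y) * (y / u - y / v)) := by field_simp; ring
      rw [e1, e2, abs_neg, abs_mul, abs_mul]
      calc _ ≤ |u * v / y| * (D * |y / u - y / v|) := by gcongr
        _ = _ := by ring
  set L := |lam| ^ b with hL
  have hL0 : 0 ≤ L := Real.rpow_nonneg (abs_nonneg _) _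
  set M := b * δ ^ (b - 1) with hM
  have hM0 : 0 ≤ M := by
    have := Real.rpow_pos_of_pos hδ (b - 1)
    positivity
  have hK0 : (0 : ℝ) ≤ K := K.2
  have hN : 0 ≤ max |lam| (L * (K + D * M)) := le_max_of_le_left (abs_nonneg _)
  refine ⟨⟨max |lam| (L * (K + D * M)), hN⟩, LipschitzOnWith.of_dist_le_mul ?_⟩
  rintro ⟨x₁, y₁⟩ ⟨h1, h1'⟩ ⟨x₂, y₂⟩ ⟨h2, h2'⟩
  simp only at h1 h1' h2 h2'
  rw [hval _ _ h1, hval _ _ h2]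
  change _ ≤ max |lam| (L * (K + D * M)) * _
  rw [Prod.dist_eq, Prod.dist_eq]
  simp only [Real.dist_eq]
  have hx : |x₁ - x₂| ≤ max |x₁ - x₂| |y₁ - y₂| := le_max_left _ _
  have hy : |y₁ - y₂| ≤ max |x₁ - x₂| |y₁ - y₂| := le_max_right _ _
  have hm0 : 0 ≤ max |x₁ - x₂| |y₁ - y₂| := (abs_nonneg _).trans hx
  apply max_le
  · rw [← mul_sub, abs_mul]
    gcongr
    exact le_max_left _ _
  · have u1 : 0 < x₁ ^ b := Real.rpow_pos_of_pos h1 _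
    have u2 : 0 < x₂ ^ b := Real.rpow_pos_of_pos h2 _
    have hr := aux_rpow b δ hb x₂ x₁ h2 h2' h1 h1'
    rw [← hM] at hr
    have hA := hu (x₁ ^ b) (x₂ ^ b) y₂ u1 u2
    have hB : |x₁ ^ b * φ (y₁ / x₁ ^ b) - x₁ ^ b * φ (y₂ / x₁ ^ b)| ≤ K * |y₁ - y₂| := by
      rw [← mul_sub, abs_mul, abs_of_pos u1]
      have := hlip (y₁ / x₁ ^ b) (y₂ / x₁ ^ b)
      rw [← sub_div, abs_div, abs_of_pos u1] at this
      calc _ ≤ x₁ ^ b * (K * (|y₁ - y₂| / x₁ ^ b)) := by gcongr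
        _ = _ := by field_simp
    have hS := abs_sub_le (x₁ ^ b * φ (y₁ / x₁ ^ b)) (x₁ ^ b * φ (y₂ / x₁ ^ b))
      (x₂ ^ b * φ (y₂ / x₂ ^ b))
    have e : L * φ (y₁ / x₁ ^ b) * x₁ ^ b - L * φ (y₂ / x₂ ^ b) * x₂ ^ b
        = L * (x₁ ^ b * φ (y₁ / x₁ ^ b) - x₂ ^ b * φ (y₂ / x₂ ^ b)) := by ring
    rw [e, abs_mul, abs_of_nonneg hL0]
    set m := max |x₁ - x₂| |y₁ - y₂| with hm
    calc _ ≤ L * (K * |y₁ - y₂| + D * (M * |x₁ - x₂|)) := by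
          gcongr
          have : D * |x₁ ^ b - x₂ ^ b| ≤ D * (M * |x₁ - x₂|) := by gcongr
          linarith
      _ ≤ L * (K * m + D * (M * m)) := by gcongr
      _ = (L * (K + D * M)) * m := by ring
      _ ≤ _ := by gcongr; exact le_max_right _ _
end

section
/- Let β = r/s be a rational number with r > s > 0 and gcd(r, s) = 1, and let F, G ∈ ℝ[X, Y] be β-quasihomogeneous polynomials of degree d ≥ 1 with height functions f₊, f₋ and g₊, g₋ respectively. Let λ₁, λ₂ be nonzero real numbers with λ₁λ₂ > 0 and let φ₁, φ₂ : ℝ → ℝ be bi-Lipschitz homeomorphisms such that: if λ₁ > 0 and λ₂ > 0 then |λ₁|^d·(g₊ ∘ φ₁) = f₊ and |λ₂|^d·(g₋ ∘ φ₂) = f₋, while if λ₁ < 0 and λ₂ < 0 then |λ₁|^d·(g₋ ∘ φ₁) = f₊ and |λ₂|^d·(g₊ ∘ φ₂) = f₋. Suppose moreover there are real numbers L₁, L₂ with φᵢ(t)/t → Lᵢ as |t| → +∞ and |λ₁|^β·L₁ = |λ₂|^β·L₂. Define Φ : ℝ² → ℝ² by Φ(x, y) := (λ₁x, |λ₁|^β·x^β·φ₁(y/x^β))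 for x > 0, Φ(x, y) := (λ₂x, |λ₂|^β·|x|^β·φ₂(y/|x|^β)) for x < 0, and Φ(0, y) := (0, |λ₁|^β·L₁·y). Then G(Φ(x, y)) = F(x, y) for all (x, y) ∈ ℝ². -/
open Filter Topology

/-- Evaluation of a polynomial in two variables at the point `(x, y)`. -/
noncomputable def eval2 (F : MvPolynomial (Fin 2) ℝ) (x y : ℝ) : ℝ :=
  MvPolynomial.eval ![x, y] F

theorem eval2_cont (F : MvPolynomial (Fin 2) ℝ) : Continuous (fun p : ℝ × ℝ => eval2 F p.1 p.2) := by
  unfold eval2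
  refine (MvPolynomial.continuous_eval F).comp ?_
  refine continuous_pi fun i => ?_
  fin_cases i
  · exact continuous_fst
  · exact continuous_snd

theorem eval2_tendsto (F : MvPolynomial (Fin 2) ℝ) (p : ℝ → ℝ × ℝ) (q : ℝ × ℝ) (l : Filter ℝ)
    (h : Tendsto p l (𝓝 q)) :
    Tendsto (fun x => eval2 F (p x).1 (p x).2) l (𝓝 (eval2 F q.1 q.2)) :=
  ((eval2_cont F).tendsto q).comp h

theorem key_aux (d : ℕ) (β : ℝ) (F G : MvPolynomial (Fin 2) ℝ)
    (hF : ∀ t x y : ℝ, 0 < t → eval2 F (t * x) (t ^ β * y) = t ^ d * eval2 F x y)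
    (hG : ∀ t x y : ℝ, 0 < t → eval2 G (t * x) (t ^ β * y) = t ^ d * eval2 G x y)
    (l e e' : ℝ) (hl : l ≠ 0) (φ : ℝ → ℝ)
    (h : ∀ t : ℝ, |l| ^ d * eval2 G e' (φ t) = eval2 F e t)
    (x y : ℝ) (hx : 0 < x) :
    eval2 G (|l| * x * e') (|l| ^ β * x ^ β * φ (y / x ^ β)) = eval2 F (x * e) y := by
  have hl' : 0 < |l| := abs_pos.mpr hl
  have hxb : 0 < x ^ β := Real.rpow_pos_of_pos hx β
  rw [← Real.mul_rpow hl'.le hx.le, hG _ _ _ (mul_pos hl' hx)]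
  have h2 := hF x e (y / x ^ β) hx
  rw [mul_div_cancel₀ _ hxb.ne'] at h2
  rw [h2, ← h]
  ring

theorem lim_aux (β : ℝ) (hβ : 0 < β) (φ : ℝ → ℝ) (L y : ℝ)
    (ht : Tendsto (fun t => φ t / t) atTop (𝓝 L))
    (hb : Tendsto (fun t => φ t / t) atBot (𝓝 L)) :
    Tendsto (fun x : ℝ => x ^ β * φ (y / x ^ β)) (𝓝[>] 0) (𝓝 (L * y)) := by
  have h0 : Tendsto (fun x : ℝ => x ^ β) (𝓝[>] 0) (𝓝 0) := by
    have := (Real.continuousAt_rpow_const 0 β (Or.inr hβ.le)).tendsto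
    rw [Real.zero_rpow hβ.ne'] at this
    exact this.mono_left nhdsWithin_le_nhds
  have hp : ∀ᶠ x : ℝ in 𝓝[>] 0, 0 < x ^ β := by
    filter_upwards [self_mem_nhdsWithin] with x hx
    exact Real.rpow_pos_of_pos hx β
  have h1 : Tendsto (fun x : ℝ => (x ^ β)⁻¹) (𝓝[>] 0) atTop :=
    tendsto_inv_nhdsGT_zero.comp (tendsto_nhdsWithin_iff.mpr ⟨h0, hp⟩)
  by_cases hy : y = 0
  · subst hy
    simpa using h0.mul_const (φ 0)
  have h2 : Tendsto (fun x : ℝ => φ (y / x ^ β) / (y / x ^ β)) (𝓝[>] 0) (𝓝 L) := by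
    rcases lt_or_gt_of_ne hy with hy | hy
    · exact hb.comp (by simpa [div_eq_mul_inv] using h1.const_mul_atTop_of_neg hy)
    · exact ht.comp (by simpa [div_eq_mul_inv] using h1.const_mul_atTop hy)
  refine (h2.mul_const y).congr' ?_
  filter_upwards [hp] with x hx
  field_simp

/-- If the height functions of two β-quasihomogeneous polynomials `F, G` of degree
`d ≥ 1` are related by a β-transition `(λ, φ)`, then `G ∘ Φ = F`, where `Φ` is the
inverse β-transform of `(λ, φ)`. -/
theorem stmt_11 (r s d : ℕ) (hrs : s < r) (hs : 0 < s) (hgcd : Nat.gcd r s = 1)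
    (hd : 1 ≤ d) (β : ℝ) (hβ : β = (r : ℝ) / (s : ℝ))
    (F G : MvPolynomial (Fin 2) ℝ)
    (hF : ∀ t x y : ℝ, 0 < t → eval2 F (t * x) (t ^ β * y) = t ^ d * eval2 F x y)
    (hG : ∀ t x y : ℝ, 0 < t → eval2 G (t * x) (t ^ β * y) = t ^ d * eval2 G x y)
    (l1 l2 : ℝ) (hl1 : l1 ≠ 0) (hl2 : l2 ≠ 0) (hll : 0 < l1 * l2)
    (φ1 φ2 : ℝ → ℝ)
    (hφ1bij : Function.Bijective φ1) (hφ1lip : ∃ K : NNReal, LipschitzWith K φ1)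
    (hφ1inv : ∃ K : NNReal, LipschitzWith K (Function.invFun φ1))
    (hφ2bij : Function.Bijective φ2) (hφ2lip : ∃ K : NNReal, LipschitzWith K φ2)
    (hφ2inv : ∃ K : NNReal, LipschitzWith K (Function.invFun φ2))
    (hpos : 0 < l1 → 0 < l2 →
      (∀ t : ℝ, |l1| ^ d * eval2 G 1 (φ1 t) = eval2 F 1 t) ∧
      (∀ t : ℝ, |l2| ^ d * eval2 G (-1) (φ2 t) = eval2 F (-1) t))
    (hneg : l1 < 0 → l2 < 0 →
      (∀ t : ℝ, |l1| ^ d * eval2 G (-1) (φ1 t) = eval2 F 1 t) ∧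
      (∀ t : ℝ, |l2| ^ d * eval2 G 1 (φ2 t) = eval2 F (-1) t))
    (L1 L2 : ℝ)
    (hL1top : Tendsto (fun t => φ1 t / t) atTop (𝓝 L1))
    (hL1bot : Tendsto (fun t => φ1 t / t) atBot (𝓝 L1))
    (hL2top : Tendsto (fun t => φ2 t / t) atTop (𝓝 L2))
    (hL2bot : Tendsto (fun t => φ2 t / t) atBot (𝓝 L2))
    (hLL : |l1| ^ β * L1 = |l2| ^ β * L2)
    (Φ : ℝ × ℝ → ℝ × ℝ)
    (hΦpos : ∀ x y : ℝ, 0 < x →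
      Φ (x, y) = (l1 * x, |l1| ^ β * x ^ β * φ1 (y / x ^ β)))
    (hΦneg : ∀ x y : ℝ, x < 0 →
      Φ (x, y) = (l2 * x, |l2| ^ β * |x| ^ β * φ2 (y / |x| ^ β)))
    (hΦ0 : ∀ y : ℝ, Φ (0, y) = (0, |l1| ^ β * L1 * y)) :
    ∀ x y : ℝ, eval2 G (Φ (x, y)).1 (Φ (x, y)).2 = eval2 F x y := by
  have hβ0 : 0 < β := by
    rw [hβ]
    have : 0 < r := by omega
    positivity
  have hP : ∀ x y : ℝ, 0 < x → eval2 G (Φ (x, y)).1 (Φ (x, y)).2 = eval2 F x y := by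
    intro x y hx
    rw [hΦpos x y hx]
    rcases lt_or_gt_of_ne hl1 with h | h
    · have h' : l2 < 0 := by nlinarith
      have := key_aux d β F G hF hG l1 1 (-1) hl1 φ1 (hneg h h').1 x y hx
      rw [abs_of_neg h] at this ⊢
      rw [mul_one x] at this
      rw [← this]
      congr 1
      ring
    · have h' : 0 < l2 := by nlinarith
      have := key_aux d β F G hF hG l1 1 1 hl1 φ1 (hpos h h').1 x y hx
      rw [abs_of_pos h] at this ⊢
      rw [mul_one x] at this
      rw [← this]
      congr 1
      ring
  intro x y
  rcases lt_trichotomy x 0 with hx | hx | hx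
  · rw [hΦneg x y hx, abs_of_neg hx]
    rcases lt_or_gt_of_ne hl2 with h | h
    · have h' : l1 < 0 := by nlinarith
      have := key_aux d β F G hF hG l2 (-1) 1 hl2 φ2 (hneg h' h).2 (-x) y (by linarith)
      rw [abs_of_neg h] at this ⊢
      rw [show -x * -1 = x by ring] at this
      rw [← this]
      congr 1
      ring
    · have h' : 0 < l1 := by nlinarith
      have := key_aux d β F G hF hG l2 (-1) (-1) hl2 φ2 (hpos h' h).2 (-x) y (by linarith)
      rw [abs_of_pos h] at this ⊢
      rw [show -x * -1 = x by ring] at this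
      rw [← this]
      congr 1
      ring
  · subst hx
    have hid : Tendsto (fun x : ℝ => x) (𝓝[>] 0) (𝓝 0) := tendsto_id.mono_left nhdsWithin_le_nhds
    have hA : Tendsto (fun x : ℝ => eval2 F x y) (𝓝[>] 0) (𝓝 (eval2 F 0 y)) :=
      eval2_tendsto F (fun x => (x, y)) (0, y) _ (hid.prodMk_nhds tendsto_const_nhds)
    have hΦt : Tendsto (fun x : ℝ => Φ (x, y)) (𝓝[>] 0) (𝓝 (Φ (0, y))) := by
      rw [hΦ0]
      have h1 : Tendsto (fun x : ℝ => l1 * x) (𝓝[>] 0) (𝓝 0) := by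
        simpa using hid.const_mul l1
      have h2 := (lim_aux β hβ0 φ1 L1 y hL1top hL1bot).const_mul (|l1| ^ β)
      rw [← mul_assoc] at h2
      refine (h1.prodMk_nhds h2).congr' ?_
      filter_upwards [self_mem_nhdsWithin] with x hx
      rw [hΦpos x y hx, mul_assoc]
    have hB := eval2_tendsto G (fun x => Φ (x, y)) (Φ (0, y)) _ hΦt
    refine tendsto_nhds_unique (hB.congr' ?_) hA
    filter_upwards [self_mem_nhdsWithin] with x hx
    exact hP x y hx
  · exact hP x y hx
end
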